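/- Let g be a finite-dimensional real Lie algebra with a norm. The subgroup P(g)₀ of the path group P(g) = C([0,1], g) is a closed and path-connected subset of the Banach space C([0,1], g) with the supremum norm. -/

import Mathlib

/-- `IsLieBracket B` says that the bilinear map `B = ⁅·,·⁆` makes the
(finite-dimensional, normed) real vector space `g` into a real Lie algebra:
it is alternating and satisfies the Jacobi identity (in Leibniz form). -/
def IsLieBracket {g : Type*} [NormedAddCommGroup g] [NormedSpace ℝ g]
    (B : g →ₗ[ℝ] g →ₗ[ℝ] g) : Prop :=
  (∀ x : g, B x x = 0) ∧
  (∀ x y z : g, B x (B y z) = B (B x y) z + B y (B x z))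

/-- The adjoint endomorphism `ad x = ⁅x, ·⁆` as a continuous linear map. -/
noncomputable def adL {g : Type*} [NormedAddCommGroup g] [NormedSpace ℝ g]
    [FiniteDimensional ℝ g] (B : g →ₗ[ℝ] g →ₗ[ℝ] g) (x : g) : g →L[ℝ] g :=
  LinearMap.toContinuousLinearMap (B x)

/-- `IsTransport B γ A` says that `A : [0,1] → End(g)` is a continuously
differentiable path of linear endomorphisms of `g` with `A 0 = id` and
`A' t = ad (γ t) ∘ A t` for `t ∈ [0,1]` (one-sided derivatives at the
endpoints, and the derivative is continuous on `[0,1]`). -/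
def IsTransport {g : Type*} [NormedAddCommGroup g] [NormedSpace ℝ g]
    [FiniteDimensional ℝ g] (B : g →ₗ[ℝ] g →ₗ[ℝ] g)
    (γ : ℝ → g) (A : ℝ → (g →L[ℝ] g)) : Prop :=
  A 0 = 1 ∧
  (∀ t ∈ Set.Icc (0:ℝ) 1,
    HasDerivWithinAt A ((adL B (γ t)).comp (A t)) (Set.Icc (0:ℝ) 1) t) ∧
  ContinuousOn (fun t => (adL B (γ t)).comp (A t)) (Set.Icc (0:ℝ) 1)

/-- The path `A_γ : [0,1] → End(g)`, i.e. the unique continuously differentiable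
solution of `A 0 = id`, `A' t = ad (γ t) ∘ A t` (chosen via choice; for a
continuous path `γ` it exists and is unique on `[0,1]`). -/
noncomputable def transport {g : Type*} [NormedAddCommGroup g] [NormedSpace ℝ g]
    [FiniteDimensional ℝ g] (B : g →ₗ[ℝ] g →ₗ[ℝ] g) (γ : ℝ → g) :
    ℝ → (g →L[ℝ] g) :=
  letI := Classical.propDecidable (∃ A : ℝ → (g →L[ℝ] g), IsTransport B γ A)
  if h : ∃ A : ℝ → (g →L[ℝ] g), IsTransport B γ A then h.choose else fun _ => 1

/-- Extension of a continuous path `[0,1] → g` to all of `ℝ` (constant outside `[0,1]`). -/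
noncomputable def pathExt {g : Type*} [TopologicalSpace g]
    (γ : C(Set.Icc (0:ℝ) 1, g)) : ℝ → g :=
  Set.IccExtend zero_le_one ⇑γ

/-- The Duistermaat–Kolk multiplication of paths: `(γ · δ)(t) = γ t + A_γ(t) (δ t)`,
as a `g`-valued function on `[0,1]`. -/
noncomputable def pathMul {g : Type*} [NormedAddCommGroup g] [NormedSpace ℝ g]
    [FiniteDimensional ℝ g] (B : g →ₗ[ℝ] g →ₗ[ℝ] g)
    (γ δ : C(Set.Icc (0:ℝ) 1, g)) : Set.Icc (0:ℝ) 1 → g :=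
  fun t => γ t + transport B (pathExt γ) t (δ t)

/-- The Duistermaat–Kolk inversion of paths: `ι(γ)(t) = -A_γ(t)⁻¹ (γ t)`,
as a `g`-valued function on `[0,1]`. -/
noncomputable def pathInv {g : Type*} [NormedAddCommGroup g] [NormedSpace ℝ g]
    [FiniteDimensional ℝ g] (B : g →ₗ[ℝ] g →ₗ[ℝ] g)
    (γ : C(Set.Icc (0:ℝ) 1, g)) : Set.Icc (0:ℝ) 1 → g :=
  fun t => -(Ring.inverse (transport B (pathExt γ) t) (γ t))

/-- `InPathZero B γ` says that `γ` belongs to the subset `P(g)₀` of the path group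
`P(g) = C([0,1], g)`: there is a continuously differentiable family
`Γ : [0,1] → P(g)` (with derivative `Γ'`) joining the constant path `0` to `γ`
such that `∫₀¹ A_{Γ s}(t)⁻¹ (Γ' s (t)) dt = 0` for all `s ∈ [0,1]`. -/
noncomputable def InPathZero {g : Type*} [NormedAddCommGroup g] [NormedSpace ℝ g]
    [FiniteDimensional ℝ g] (B : g →ₗ[ℝ] g →ₗ[ℝ] g)
    (γ : C(Set.Icc (0:ℝ) 1, g)) : Prop :=
  ∃ Γ Γ' : ℝ → C(Set.Icc (0:ℝ) 1, g),
    (∀ s ∈ Set.Icc (0:ℝ) 1, HasDerivWithinAt Γ (Γ' s) (Set.Icc (0:ℝ) 1) s) ∧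
    ContinuousOn Γ' (Set.Icc (0:ℝ) 1) ∧
    Γ 0 = 0 ∧ Γ 1 = γ ∧
    ∀ s ∈ Set.Icc (0:ℝ) 1,
      (∫ t in (0:ℝ)..1,
        Ring.inverse (transport B (pathExt (Γ s)) t) (pathExt (Γ' s) t)) = 0

/-!
Write `A_γ` for the transport of `γ` and `∂` for the Chevalley–Eilenberg boundary of the exterior
algebra `Λ g`.

*Periods vanish.* If a constant path with central value `x` lies in `P(g)₀`, then `x = 0`. A curve
`Γ` from `0` to `x` as in the definition of `P(g)₀` gives a flat connection `a ds + b dt` on the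
square, `a = ∫₀ᵗ A_Γ⁻¹ ∂ₛΓ` and `b = A_Γ⁻¹ Γ`, whose transport is `S = A_Γ⁻¹`. By Stokes' theorem
the operator `Φ w = ∬ a ∧ b ∧ Λ(S) w` satisfies `∂ (Φ w) = Φ (∂ w) - x ∧ w`, so `wₙ = Φⁿ 1`
satisfies `∂ wₙ₊₁ = -(n + 1) x ∧ wₙ`, while `wₙ = 0` for large `n` because it has degree `2 n`.
Contracting with a functional that does not kill `x` and descending on `n` puts `1` in
`im ∂ + x ∧ Λ g`, which is impossible unless `x = 0`.

*Local correction.* Every small `δ` is corrected into `P(g)₀` by a small constant path: `δ · x` is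
in `P(g)₀` for some `x` obtained from an ordinary differential equation. If `A_δ(1) = 1`, then
`A_x(1) = 1` as well, and `A_x(1)⁻¹ = 1 - D ∘ ad x`, with `D = ∫₀¹ A_x⁻¹` invertible, shows that
`x` is central.

*Closedness.* For `γ` in the closure of `P(g)₀`, applying the correction to `p⁻¹ · γ` with `p` in
`P(g)₀` close to `γ` shows that `γ + x` is in `P(g)₀` for arbitrarily small central `x`. Two such
`x` differ by a period, so they coincide, hence `x = 0`.
-/

open Set Filter Topology MeasureTheory Function
open scoped unitInterval

section ExteriorAlgebra

open ExteriorAlgebra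

variable {R M N : Type*} [CommRing R] [AddCommGroup M] [Module R M] [AddCommGroup N] [Module R N]

@[elab_as_elim]
theorem exteriorAlgebra_left_induction {P : ExteriorAlgebra R M → Prop} (v : ExteriorAlgebra R M)
    (algebraMap : ∀ r, P (algebraMap R _ r)) (add : ∀ v w, P v → P w → P (v + w))
    (ι_mul : ∀ m v, P v → P (ι R m * v)) : P v :=
  CliffordAlgebra.left_induction (Q := (0 : QuadraticForm R M)) algebraMap add
    (fun v m hv => ι_mul m v hv) v

theorem ι_mul_ι_mul_comm (a b : M) (v : ExteriorAlgebra R M) :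
    ι R a * (ι R b * v) = -(ι R b * (ι R a * v)) := by
  rw [← mul_assoc, ← mul_assoc, eq_neg_of_add_eq_zero_left (ι_add_mul_swap a b), neg_mul]

theorem ι_mul_ι_mul_self (a : M) (v : ExteriorAlgebra R M) : ι R a * (ι R a * v) = 0 := by
  rw [← mul_assoc, ι_sq_zero, zero_mul]

/-- The recursion step `(m, (v, θ v)) ↦ θ (m ∧ v) = T m ∧ v + m ∧ θ v` for the derivation `θ`
extending `T`. -/
noncomputable def exteriorDerivationStep (T : Module.End R M) :
    M →ₗ[R] ExteriorAlgebra R M × ExteriorAlgebra R M →ₗ[R] ExteriorAlgebra R M :=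
  LinearMap.mk₂ R (fun m p => ι R (T m) * p.1 + ι R m * p.2)
    (fun _ _ _ => by simp only [map_add, add_mul]; abel)
    (fun _ _ _ => by simp only [map_smul, smul_mul_assoc, smul_add])
    (fun _ _ _ => by simp only [Prod.fst_add, Prod.snd_add, mul_add]; abel)
    (fun _ _ _ => by simp only [Prod.smul_fst, Prod.smul_snd, mul_smul_comm, smul_add])

/-- The derivation of the exterior algebra extending an endomorphism `T` of the module. -/
noncomputable def exteriorDerivation (T : Module.End R M) : Module.End R (ExteriorAlgebra R M) :=
  CliffordAlgebra.foldr' (0 : QuadraticForm R M) (exteriorDerivationStep T) (fun m v θv => by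
    change ι R (T m) * (ι R m * v) + ι R m * (ι R (T m) * v + ι R m * θv) = (0 : R) • θv
    rw [ι_mul_ι_mul_comm, mul_add, ι_mul_ι_mul_self, add_zero, neg_add_cancel, zero_smul]) 0

@[simp]
theorem exteriorDerivation_algebraMap (T : Module.End R M) (r : R) :
    exteriorDerivation T (algebraMap R _ r) = 0 :=
  (CliffordAlgebra.foldr'_algebraMap _ _ _ _ _).trans (smul_zero r)

theorem exteriorDerivation_ι_mul (T : Module.End R M) (m : M) (v : ExteriorAlgebra R M) :
    exteriorDerivation T (ι R m * v) = ι R (T m) * v + ι R m * exteriorDerivation T v :=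
  CliffordAlgebra.foldr'_ι_mul _ _ _ _ _ _

theorem exteriorDerivation_zero : exteriorDerivation (0 : Module.End R M) = 0 := by
  refine LinearMap.ext fun v => ?_
  induction v using exteriorAlgebra_left_induction with
  | algebraMap r => simp
  | add v w hv hw => rw [map_add, hv, hw, map_add]
  | ι_mul m v hv => simp [exteriorDerivation_ι_mul, hv]

theorem exteriorDerivation_add (S T : Module.End R M) :
    exteriorDerivation (S + T) = exteriorDerivation S + exteriorDerivation T := by
  refine LinearMap.ext fun v => ?_
  induction v using exteriorAlgebra_left_induction with
  | algebraMap r => simp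
  | add v w hv hw => simp only [map_add, hv, hw]
  | ι_mul m v hv =>
    simp only [LinearMap.add_apply] at hv ⊢
    simp only [exteriorDerivation_ι_mul, hv, map_add, LinearMap.add_apply, mul_add, add_mul]
    abel

theorem exteriorDerivation_smul (r : R) (T : Module.End R M) :
    exteriorDerivation (r • T) = r • exteriorDerivation T := by
  refine LinearMap.ext fun v => ?_
  induction v using exteriorAlgebra_left_induction with
  | algebraMap r => simp
  | add v w hv hw => simp only [map_add, hv, hw]
  | ι_mul m v hv =>
    simp only [LinearMap.smul_apply] at hv ⊢
    simp only [exteriorDerivation_ι_mul, hv, map_smul, LinearMap.smul_apply, smul_add,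
      smul_mul_assoc, mul_smul_comm]

theorem exteriorDerivation_lie (S T : Module.End R M) :
    exteriorDerivation ⁅S, T⁆ = ⁅exteriorDerivation S, exteriorDerivation T⁆ := by
  refine LinearMap.ext fun v => ?_
  induction v using exteriorAlgebra_left_induction with
  | algebraMap r => simp [Ring.lie_def]
  | add v w hv hw => simp only [map_add, hv, hw]
  | ι_mul m v hv =>
    simp only [Ring.lie_def, LinearMap.sub_apply, Module.End.mul_apply] at hv ⊢
    simp only [exteriorDerivation_ι_mul, hv, map_add, map_sub, LinearMap.sub_apply,
      Module.End.mul_apply, sub_mul, mul_sub]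
    abel

theorem exteriorDerivation_map {S : Module.End R M} {T : Module.End R N} {f : M →ₗ[R] N}
    (hf : ∀ m, T (f m) = f (S m)) (v : ExteriorAlgebra R M) :
    exteriorDerivation T (map f v) = map f (exteriorDerivation S v) := by
  induction v using exteriorAlgebra_left_induction with
  | algebraMap r => simp
  | add v w hv hw => simp only [map_add, hv, hw]
  | ι_mul m v hv => simp only [map_mul, map_apply_ι, exteriorDerivation_ι_mul, map_add, hv, hf]

theorem algebraMapInv_ι_mul (m : M) (v : ExteriorAlgebra R M) :
    algebraMapInv (ι R m * v) = 0 := by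
  simp [algebraMapInv]

theorem algebraMapInv_exteriorDerivation (T : Module.End R M) (v : ExteriorAlgebra R M) :
    algebraMapInv (exteriorDerivation T v) = 0 := by
  induction v using exteriorAlgebra_left_induction with
  | algebraMap r => simp
  | add v w hv hw => simp only [map_add, hv, hw, add_zero]
  | ι_mul m v _ => simp only [exteriorDerivation_ι_mul, map_add, algebraMapInv_ι_mul, add_zero]

/-- The recursion step `(m, (v, ∂ v)) ↦ ∂ (m ∧ v) = θ_m v - m ∧ ∂ v` for the Chevalley–Eilenberg
boundary, `θ_m` being the derivation extending `B m`. -/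
noncomputable def ceBoundaryStep (B : M →ₗ[R] M →ₗ[R] M) :
    M →ₗ[R] ExteriorAlgebra R M × ExteriorAlgebra R M →ₗ[R] ExteriorAlgebra R M :=
  LinearMap.mk₂ R (fun m p => exteriorDerivation (B m) p.1 - ι R m * p.2)
    (fun _ _ _ => by
      simp only [map_add, exteriorDerivation_add, LinearMap.add_apply, add_mul]; abel)
    (fun _ _ _ => by
      simp only [map_smul, exteriorDerivation_smul, LinearMap.smul_apply, smul_mul_assoc, smul_sub])
    (fun _ _ _ => by simp only [Prod.fst_add, Prod.snd_add, map_add, mul_add]; abel)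
    (fun _ _ _ => by simp only [Prod.smul_fst, Prod.smul_snd, map_smul, mul_smul_comm, smul_sub])

/-- The Chevalley–Eilenberg boundary on the exterior algebra of a module with an alternating
bracket `B`. -/
noncomputable def ceBoundary (B : M →ₗ[R] M →ₗ[R] M) (hB : B.IsAlt) :
    Module.End R (ExteriorAlgebra R M) :=
  CliffordAlgebra.foldr' (0 : QuadraticForm R M) (ceBoundaryStep B) (fun m v Dv => by
    change exteriorDerivation (B m) (ι R m * v) - ι R m * (exteriorDerivation (B m) v - ι R m * Dv)
      = (0 : R) • Dv
    rw [exteriorDerivation_ι_mul, hB, mul_sub, ι_mul_ι_mul_self, map_zero, zero_mul, zero_add,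
      sub_zero, sub_self, zero_smul]) 0

section Boundary

variable {B : M →ₗ[R] M →ₗ[R] M} {hB : B.IsAlt}

@[simp]
theorem ceBoundary_algebraMap (r : R) : ceBoundary B hB (algebraMap R _ r) = 0 :=
  (CliffordAlgebra.foldr'_algebraMap _ _ _ _ _).trans (smul_zero r)

theorem ceBoundary_ι_mul (m : M) (v : ExteriorAlgebra R M) :
    ceBoundary B hB (ι R m * v) = exteriorDerivation (B m) v - ι R m * ceBoundary B hB v :=
  CliffordAlgebra.foldr'_ι_mul _ _ _ _ _ _

theorem exteriorDerivation_ceBoundary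
    (hJ : ∀ x y z, B x (B y z) = B (B x y) z + B y (B x z)) (y : M) (v : ExteriorAlgebra R M) :
    exteriorDerivation (B y) (ceBoundary B hB v) =
      ceBoundary B hB (exteriorDerivation (B y) v) := by
  induction v using exteriorAlgebra_left_induction with
  | algebraMap r => simp
  | add v w hv hw => simp only [map_add, hv, hw]
  | ι_mul m v hv =>
    have hlie : B (B y m) = ⁅B y, B m⁆ := LinearMap.ext fun z => by
      rw [Ring.lie_def, LinearMap.sub_apply, Module.End.mul_apply, Module.End.mul_apply, hJ,
        add_sub_cancel_right]
    have hθ : exteriorDerivation (B (B y m)) v =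
        exteriorDerivation (B y) (exteriorDerivation (B m) v) -
          exteriorDerivation (B m) (exteriorDerivation (B y) v) := by
      rw [hlie, exteriorDerivation_lie]; rfl
    simp only [exteriorDerivation_ι_mul, ceBoundary_ι_mul, map_add, map_sub, ← hv, hθ]
    abel

theorem ceBoundary_ceBoundary (hJ : ∀ x y z, B x (B y z) = B (B x y) z + B y (B x z))
    (v : ExteriorAlgebra R M) : ceBoundary B hB (ceBoundary B hB v) = 0 := by
  induction v using exteriorAlgebra_left_induction with
  | algebraMap r => simp
  | add v w hv hw => simp only [map_add, hv, hw, add_zero]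
  | ι_mul m v hv =>
    rw [ceBoundary_ι_mul, map_sub, ceBoundary_ι_mul, hv, mul_zero, sub_zero,
      exteriorDerivation_ceBoundary hJ, sub_self]

theorem ceBoundary_map {B' : N →ₗ[R] N →ₗ[R] N} {hB' : B'.IsAlt} {f : M →ₗ[R] N}
    (hf : ∀ x y, B' (f x) (f y) = f (B x y)) (v : ExteriorAlgebra R M) :
    ceBoundary B' hB' (map f v) = map f (ceBoundary B hB v) := by
  induction v using exteriorAlgebra_left_induction with
  | algebraMap r => simp
  | add v w hv hw => simp only [map_add, hv, hw]
  | ι_mul m v hv =>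
    simp only [map_mul, map_apply_ι, ceBoundary_ι_mul, map_sub, hv, exteriorDerivation_map (hf m)]

theorem ceBoundary_ι_mul_of_central {x : M} (hx : B x = 0) (v : ExteriorAlgebra R M) :
    ceBoundary B hB (ι R x * v) = -(ι R x * ceBoundary B hB v) := by
  rw [ceBoundary_ι_mul, hx, exteriorDerivation_zero, LinearMap.zero_apply, zero_sub]

theorem algebraMapInv_ceBoundary (v : ExteriorAlgebra R M) :
    algebraMapInv (ceBoundary B hB v) = 0 := by
  induction v using exteriorAlgebra_left_induction with
  | algebraMap r => simp
  | add v w hv hw => simp only [map_add, hv, hw, add_zero]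
  | ι_mul m v _ =>
    rw [ceBoundary_ι_mul, map_sub, algebraMapInv_exteriorDerivation, algebraMapInv_ι_mul, sub_zero]

variable (B hB) in
/-- The sum of the boundaries and the left multiples of `x` in the exterior algebra. -/
noncomputable def boundarySupMul (x : M) : Submodule R (ExteriorAlgebra R M) :=
  LinearMap.range (ceBoundary B hB) ⊔ LinearMap.range (LinearMap.mulLeft R (ι R x))

theorem mem_boundarySupMul {x : M} {v : ExteriorAlgebra R M} :
    v ∈ boundarySupMul B hB x ↔ ∃ a b, ceBoundary B hB a + ι R x * b = v := by
  simp only [boundarySupMul, Submodule.mem_sup, LinearMap.mem_range, LinearMap.mulLeft_apply,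
    exists_exists_eq_and]

theorem ι_mul_mem_boundarySupMul {x : M} (v : ExteriorAlgebra R M) :
    ι R x * v ∈ boundarySupMul B hB x :=
  Submodule.mem_sup_right (LinearMap.mem_range_self (LinearMap.mulLeft R (ι R x)) v)

theorem contractLeft_ceBoundary_mem_boundarySupMul
    (hJ : ∀ x y z, B x (B y z) = B (B x y) z + B y (B x z)) {x : M} (hx : B x = 0)
    (l : Module.Dual R M) {v : ExteriorAlgebra R M} (hv : v ∈ boundarySupMul B hB x) :
    CliffordAlgebra.contractLeft l (ceBoundary B hB v) ∈ boundarySupMul B hB x := by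
  obtain ⟨a, b, rfl⟩ := mem_boundarySupMul.1 hv
  refine mem_boundarySupMul.2 ⟨-(l x • b), CliffordAlgebra.contractLeft l (ceBoundary B hB b), ?_⟩
  rw [map_add, ceBoundary_ceBoundary hJ, zero_add, ceBoundary_ι_mul_of_central hx, map_neg,
    map_neg, map_smul, CliffordAlgebra.contractLeft_ι_mul, neg_sub]
  exact neg_add_eq_sub _ _

theorem one_notMem_boundarySupMul [Nontrivial R] (x : M) : 1 ∉ boundarySupMul B hB x := by
  rw [mem_boundarySupMul]
  rintro ⟨a, b, hab⟩
  have h := congrArg algebraMapInv hab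
  rw [map_add, algebraMapInv_ceBoundary, algebraMapInv_ι_mul, add_zero, map_one] at h
  exact zero_ne_one h

end Boundary

section Descent

variable {K V : Type*} [Field K] [CharZero K] [AddCommGroup V] [Module K V]
  {B : V →ₗ[K] V →ₗ[K] V} {hB : B.IsAlt} {x : V} {w : ℕ → ExteriorAlgebra K V}

theorem mem_boundarySupMul_of_succ (hJ : ∀ x y z, B x (B y z) = B (B x y) z + B y (B x z))
    (hx : B x = 0) (hx0 : x ≠ 0)
    (hw : ∀ n, ceBoundary B hB (w (n + 1)) = -((n + 1 : K) • (ι K x * w n))) {n : ℕ}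
    (hn : w (n + 1) ∈ boundarySupMul B hB x) : w n ∈ boundarySupMul B hB x := by
  obtain ⟨l, hl⟩ : ∃ l : Module.Dual K V, l x ≠ 0 := by
    by_contra! h
    exact hx0 ((Module.forall_dual_apply_eq_zero_iff K x).1 h)
  have hcontract := contractLeft_ceBoundary_mem_boundarySupMul hJ hx l hn
  have hcontract_eq : CliffordAlgebra.contractLeft l (ceBoundary B hB (w (n + 1))) =
      -((n + 1 : K) • (l x • w n - ι K x * CliffordAlgebra.contractLeft l (w n))) := by
    rw [hw, map_neg, map_smul]
    exact congrArg (fun v => -((n + 1 : K) • v)) (CliffordAlgebra.contractLeft_ι_mul _ _ _)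
  rw [hcontract_eq, Submodule.neg_mem_iff,
    Submodule.smul_mem_iff _ (Nat.cast_add_one_ne_zero n)] at hcontract
  have hlx := add_mem hcontract
    (ι_mul_mem_boundarySupMul (hB := hB) (CliffordAlgebra.contractLeft l (w n)))
  rwa [sub_add_cancel, Submodule.smul_mem_iff _ hl] at hlx

theorem eq_zero_of_ceBoundary_tower
    (hJ : ∀ x y z, B x (B y z) = B (B x y) z + B y (B x z)) (hx : B x = 0) (hw0 : w 0 = 1)
    (hw : ∀ n, ceBoundary B hB (w (n + 1)) = -((n + 1 : K) • (ι K x * w n)))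
    (hN : ∃ N, w N = 0) : x = 0 := by
  by_contra hx0
  obtain ⟨N, hN⟩ := hN
  have hmem : w 0 ∈ boundarySupMul B hB x :=
    Nat.decreasingInduction (motive := fun n _ => w n ∈ boundarySupMul B hB x)
      (fun _ _ => mem_boundarySupMul_of_succ hJ hx hx0 hw) (hN ▸ zero_mem _) (Nat.zero_le N)
  exact one_notMem_boundarySupMul x (hw0 ▸ hmem)

end Descent

instance finite_exteriorAlgebra {R M : Type*} [CommRing R] [AddCommGroup M] [Module R M]
    [Module.Free R M] [Module.Finite R M] : Module.Finite R (ExteriorAlgebra R M) :=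
  let ⟨_, _⟩ := exists_wellFoundedLT (Module.Free.ChooseBasisIndex R M)
  Module.Finite.of_basis (Module.Free.chooseBasis R M).ExteriorAlgebra

theorem exists_eq_zero_of_eigenvector_pow {K V : Type*} [Field K] [AddCommGroup V] [Module K V]
    [Module.Finite K V] (T : Module.End K V) {μ : K} (hμ : Injective fun n : ℕ => μ ^ n)
    {w : ℕ → V} (hw : ∀ n, T (w n) = μ ^ n • w n) : ∃ N, w N = 0 := by
  by_contra! hw0
  exact infinite_of_injective_forall_mem hμ
    (fun n => Module.End.hasEigenvalue_of_hasEigenvector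
      ⟨Module.End.mem_eigenspace_iff.2 (hw n), hw0 n⟩) T.finite_hasEigenvalue

end ExteriorAlgebra

section PathCalculus

variable {E F G : Type*} [NormedAddCommGroup E] [NormedSpace ℝ E]
  [NormedAddCommGroup F] [NormedSpace ℝ F] [NormedAddCommGroup G] [NormedSpace ℝ G]

theorem continuous_pathExt {X : Type*} [TopologicalSpace X] (f : C(I, X)) :
    Continuous (pathExt f) :=
  f.continuous.Icc_extend'

theorem pathExt_of_mem {X : Type*} [TopologicalSpace X] (f : C(I, X)) {t : ℝ} (ht : t ∈ I) :
    pathExt f t = f ⟨t, ht⟩ :=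
  IccExtend_of_mem _ _ ht

theorem pathExt_coe {X : Type*} [TopologicalSpace X] (f : C(I, X)) (t : I) :
    pathExt f t = f t :=
  IccExtend_val _ _ t

theorem norm_pathExt_le {E : Type*} [SeminormedAddCommGroup E] (f : C(I, E)) (t : ℝ) :
    ‖pathExt f t‖ ≤ ‖f‖ :=
  f.norm_coe_le_norm _

/-- The primitive `t ↦ ∫₀ᵗ f` of a path `f`, as a bounded operator on paths. -/
noncomputable def pathPrimitive : C(I, E) →L[ℝ] C(I, E) :=
  LinearMap.mkContinuous
    { toFun f := ⟨fun t => ∫ u in (0 : ℝ)..t, pathExt f u,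
        (intervalIntegral.continuous_primitive
          (fun a b => (continuous_pathExt f).intervalIntegrable a b) 0).comp
          continuous_subtype_val⟩
      map_add' f h := by
        ext t
        exact intervalIntegral.integral_add
          ((continuous_pathExt f).intervalIntegrable _ _)
          ((continuous_pathExt h).intervalIntegrable _ _)
      map_smul' r f := by
        ext t
        exact intervalIntegral.integral_smul r (pathExt f) } 1 fun f => by
    refine (ContinuousMap.norm_le _ (by positivity)).2 fun t => ?_
    refine (intervalIntegral.norm_integral_le_of_norm_le_const
      fun u _ => norm_pathExt_le f u).trans ?_
    rw [sub_zero, abs_of_nonneg t.2.1, mul_comm]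
    exact mul_le_mul_of_nonneg_right t.2.2 (norm_nonneg _)

theorem pathPrimitive_apply (f : C(I, E)) (t : I) :
    pathPrimitive f t = ∫ u in (0 : ℝ)..t, pathExt f u := rfl

@[simp]
theorem pathPrimitive_apply_zero (f : C(I, E)) : pathPrimitive f 0 = 0 :=
  intervalIntegral.integral_same

/-- The pointwise application of a bounded bilinear map to two paths. -/
noncomputable def pathBilin (b : E →L[ℝ] F →L[ℝ] G) : C(I, E) →L[ℝ] C(I, F) →L[ℝ] C(I, G) :=
  LinearMap.mkContinuous₂
    (LinearMap.mk₂ ℝ (fun f h => (⟨fun t => b (f t) (h t), by fun_prop⟩ : C(I, G)))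
      (fun _ _ _ => by ext; simp) (fun _ _ _ => by ext; simp) (fun _ _ _ => by ext; simp)
      (fun _ _ _ => by ext; simp)) ‖b‖ fun f h => by
    refine (ContinuousMap.norm_le _ (by positivity)).2 fun t => ?_
    refine (b.le_opNorm₂ (f t) (h t)).trans ?_
    gcongr
    · exact f.norm_coe_le_norm t
    · exact h.norm_coe_le_norm t

/-- The pointwise application of a path of operators to a path of vectors. -/
noncomputable def pathApply : C(I, E →L[ℝ] F) →L[ℝ] C(I, E) →L[ℝ] C(I, F) :=
  pathBilin (.id ℝ (E →L[ℝ] F))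

@[simp]
theorem pathApply_apply (A : C(I, E →L[ℝ] F)) (f : C(I, E)) (t : I) :
    pathApply A f t = A t (f t) := rfl

@[simp]
theorem pathApply_one (f : C(I, E)) : pathApply (1 : C(I, E →L[ℝ] E)) f = f := rfl

theorem pathApply_mul (A A' : C(I, E →L[ℝ] E)) (f : C(I, E)) :
    pathApply (A * A') f = pathApply A (pathApply A' f) := rfl

/-- The path `F` is continuously differentiable with derivative the path `f` (one-sided at the
endpoints). -/
def HasPathDeriv (F f : C(I, E)) : Prop :=
  ∀ t ∈ I, HasDerivWithinAt (pathExt F) (pathExt f t) I t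

namespace HasPathDeriv

variable {f f' h h' : C(I, E)}

theorem congr_deriv (hf : HasPathDeriv f f') (e : f' = h') : HasPathDeriv f h' := e ▸ hf

protected theorem const (x : E) : HasPathDeriv (.const I x) 0 := fun t _ =>
  hasDerivWithinAt_const t I x

protected theorem add (hf : HasPathDeriv f f') (hh : HasPathDeriv h h') :
    HasPathDeriv (f + h) (f' + h') := fun t ht => (hf t ht).add (hh t ht)

protected theorem sub (hf : HasPathDeriv f f') (hh : HasPathDeriv h h') :
    HasPathDeriv (f - h) (f' - h') := fun t ht => (hf t ht).sub (hh t ht)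

protected theorem pathBilin (b : E →L[ℝ] F →L[ℝ] G) {k k' : C(I, F)} (hf : HasPathDeriv f f')
    (hk : HasPathDeriv k k') :
    HasPathDeriv (pathBilin b f k) (pathBilin b f k' + pathBilin b f' k) := fun t ht =>
  b.hasDerivWithinAt_of_bilinear (hf t ht) (hk t ht)

protected theorem pathApply {A A' : C(I, E →L[ℝ] F)} (hA : HasPathDeriv A A')
    (hf : HasPathDeriv f f') :
    HasPathDeriv (pathApply A f) (pathApply A f' + pathApply A' f) :=
  hA.pathBilin _ hf

protected theorem map (L : E →L[ℝ] F) (hf : HasPathDeriv f f') :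
    HasPathDeriv (L.compLeftContinuous ℝ I f) (L.compLeftContinuous ℝ I f') := fun t ht =>
  L.hasFDerivAt.comp_hasDerivWithinAt t (hf t ht)

protected theorem mul {R : Type*} [NormedRing R] [NormedAlgebra ℝ R] {X X' Y Y' : C(I, R)}
    (hX : HasPathDeriv X X') (hY : HasPathDeriv Y Y') :
    HasPathDeriv (X * Y) (X * Y' + X' * Y) :=
  hX.pathBilin (.mul ℝ R) hY

theorem eq_const_add_pathPrimitive [CompleteSpace E] (hf : HasPathDeriv f f') :
    f = .const I (f 0) + pathPrimitive f' := by
  ext t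
  have ftc := intervalIntegral.integral_eq_sub_of_hasDerivAt_of_le t.2.1
    (continuous_pathExt f).continuousOn
    (fun u hu => (hf u ⟨hu.1.le, hu.2.le.trans t.2.2⟩).hasDerivAt
      (Icc_mem_nhds hu.1 (hu.2.trans_le t.2.2)))
    ((continuous_pathExt f').intervalIntegrable _ _)
  rw [pathExt_coe, pathExt_of_mem f unitInterval.zero_mem] at ftc
  rw [ContinuousMap.add_apply, pathPrimitive_apply, ftc]
  exact (add_sub_cancel (f 0) (f t)).symm

theorem eq_of_apply_zero_eq [CompleteSpace E] (hf : HasPathDeriv f f') (hh : HasPathDeriv h f')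
    (h0 : f 0 = h 0) : f = h := by
  rw [hf.eq_const_add_pathPrimitive, h0, ← hh.eq_const_add_pathPrimitive]

end HasPathDeriv

theorem hasPathDeriv_pathPrimitive [CompleteSpace E] (f : C(I, E)) :
    HasPathDeriv (pathPrimitive f) f := fun t ht => by
  have hderiv := intervalIntegral.integral_hasDerivAt_right
    ((continuous_pathExt f).intervalIntegrable 0 t)
    ((continuous_pathExt f).stronglyMeasurableAtFilter _ _) (continuous_pathExt f).continuousAt
  exact hderiv.hasDerivWithinAt.congr (fun u hu => pathExt_of_mem _ hu) (pathExt_of_mem _ ht)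

theorem map_pathPrimitive [CompleteSpace E] [CompleteSpace F] (L : E →L[ℝ] F) (f : C(I, E))
    (t : I) : L (pathPrimitive f t) = pathPrimitive (L.compLeftContinuous ℝ I f) t := by
  have h0 : L.compLeftContinuous ℝ I (pathPrimitive f) 0 = 0 :=
    (congrArg L (pathPrimitive_apply_zero f)).trans (map_zero L)
  exact congr($(((hasPathDeriv_pathPrimitive f).map L).eq_of_apply_zero_eq
    (hasPathDeriv_pathPrimitive _) (h0.trans (pathPrimitive_apply_zero _).symm)) t)

theorem pathPrimitive_const_apply [CompleteSpace E] (x : E) (t : I) :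
    pathPrimitive (.const I x) t = (t : ℝ) • x := by
  refine (intervalIntegral.integral_const x).trans ?_
  rw [sub_zero]

end PathCalculus

section Volterra

variable {E : Type*} [NormedAddCommGroup E] [NormedSpace ℝ E]
  {K : C(I, E) →L[ℝ] C(I, E)} {C : NNReal}

theorem norm_pow_pathPrimitive_comp_apply_le (hK : ∀ f t, ‖K f t‖ ≤ C * ‖f t‖) (n : ℕ)
    (f : C(I, E)) (t : I) :
    ‖((pathPrimitive ∘L K) ^ n) f t‖ ≤ C ^ n * t ^ n / n.factorial * ‖f‖ := by
  induction n generalizing t with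
  | zero => simpa using f.norm_coe_le_norm t
  | succ n ih =>
    set h := ((pathPrimitive ∘L K) ^ n) f
    have integrand_le : ∀ u ∈ Ioc (0 : ℝ) t,
        ‖pathExt (K h) u‖ ≤ C ^ (n + 1) / n.factorial * ‖f‖ * u ^ n := fun u hu => by
      have hu' : u ∈ I := ⟨hu.1.le, hu.2.trans t.2.2⟩
      calc ‖pathExt (K h) u‖ ≤ C * ‖h ⟨u, hu'⟩‖ := by
            rw [pathExt_of_mem _ hu']
            exact hK h _
        _ ≤ C * (C ^ n * u ^ n / n.factorial * ‖f‖) := by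
            gcongr
            exact ih ⟨u, hu'⟩
        _ = _ := by ring
    rw [pow_succ']
    calc ‖pathPrimitive (K h) t‖
        ≤ ∫ u in (0 : ℝ)..t, C ^ (n + 1) / n.factorial * ‖f‖ * u ^ n :=
          intervalIntegral.norm_integral_le_of_norm_le t.2.1 (.of_forall integrand_le)
            (Continuous.intervalIntegrable (by fun_prop) _ _)
      _ = C ^ (n + 1) * t ^ (n + 1) / (n + 1).factorial * ‖f‖ := by
          rw [intervalIntegral.integral_const_mul, integral_pow, Nat.factorial_succ]
          push_cast
          field_simp
          simp

variable [CompleteSpace E]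

theorem isUnit_one_sub_pathPrimitive_comp (hK : ∀ f t, ‖K f t‖ ≤ C * ‖f t‖) :
    IsUnit (1 - pathPrimitive ∘L K) := by
  set T := pathPrimitive ∘L K
  obtain ⟨n, hn⟩ : ∃ n : ℕ, (C : ℝ) ^ n / n.factorial < 1 :=
    ((FloorSemiring.tendsto_pow_div_factorial_atTop (C : ℝ)).eventually
      (gt_mem_nhds zero_lt_one)).exists
  have norm_lt : ‖T ^ n‖ < 1 := by
    refine (ContinuousLinearMap.opNorm_le_bound _ (by positivity) fun f => ?_).trans_lt hn
    refine (ContinuousMap.norm_le _ (by positivity)).2 fun t => ?_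
    refine (norm_pow_pathPrimitive_comp_apply_le hK n f t).trans ?_
    gcongr
    exact mul_le_of_le_one_right (by positivity) (pow_le_one₀ t.2.1 t.2.2)
  have left := mul_neg_geom_sum T n
  have right := geom_sum_mul_neg T n
  have unit : IsUnit (1 - T ^ n) :=
    isUnit_one_sub_of_norm_lt_one (R := C(I, E) →L[ℝ] C(I, E)) norm_lt
  rw [← left] at unit
  exact (Commute.isUnit_mul_iff (left.trans right.symm)).1 unit |>.1

theorem eq_add_pathPrimitive_of_inverse (hK : ∀ f t, ‖K f t‖ ≤ C * ‖f t‖) (c : C(I, E)) :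
    Ring.inverse (1 - pathPrimitive ∘L K) c =
      c + pathPrimitive (K (Ring.inverse (1 - pathPrimitive ∘L K) c)) := by
  have h := congr($(Ring.mul_inverse_cancel _ (isUnit_one_sub_pathPrimitive_comp hK)) c)
  exact sub_eq_iff_eq_add.1 h

theorem exists_hasPathDeriv_linear (hK : ∀ f t, ‖K f t‖ ≤ C * ‖f t‖) (x : E) :
    ∃ F : C(I, E), F 0 = x ∧ HasPathDeriv F (K F) := by
  have h := eq_add_pathPrimitive_of_inverse hK (.const I x)
  set F := Ring.inverse (1 - pathPrimitive ∘L K) (.const I x)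
  refine ⟨F, by rw [h]; simp, ?_⟩
  have deriv := (HasPathDeriv.const x).add (hasPathDeriv_pathPrimitive (K F))
  rwa [← h, zero_add] at deriv

theorem HasPathDeriv.eq_zero_of_linear (hK : ∀ f t, ‖K f t‖ ≤ C * ‖f t‖) {F : C(I, E)}
    (hF : HasPathDeriv F (K F)) (h0 : F 0 = 0) : F = 0 := by
  have h : (1 - pathPrimitive ∘L K) F = 0 := by
    have := hF.eq_const_add_pathPrimitive
    rw [h0] at this
    exact sub_eq_zero.2 (this.trans (zero_add _))
  have cancel := congr($(Ring.inverse_mul_cancel _ (isUnit_one_sub_pathPrimitive_comp hK)) F)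
  calc F = Ring.inverse (1 - pathPrimitive ∘L K) ((1 - pathPrimitive ∘L K) F) := cancel.symm
    _ = 0 := by rw [h, map_zero]

end Volterra

section OrderedExp

variable {R : Type*} [NormedRing R] [NormedAlgebra ℝ R]

theorem norm_mul_apply_le (a f : C(I, R)) (t : I) :
    ‖pathBilin (.mul ℝ R) a f t‖ ≤ ‖a‖₊ * ‖f t‖ :=
  (norm_mul_le _ _).trans (mul_le_mul_of_nonneg_right (a.norm_coe_le_norm t) (norm_nonneg _))

theorem norm_mul_flip_apply_le (a f : C(I, R)) (t : I) :
    ‖(pathBilin (.mul ℝ R)).flip a f t‖ ≤ ‖a‖₊ * ‖f t‖ :=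
  (norm_mul_le _ _).trans ((mul_comm _ _).trans_le
    (mul_le_mul_of_nonneg_right (a.norm_coe_le_norm t) (norm_nonneg _)))

/-- The ordered exponential of a path `a` in a Banach algebra: the solution of `X' = a X`,
`X 0 = 1`, obtained by inverting the Volterra operator `X ↦ X - ∫ a X`. -/
noncomputable def orderedExp (a : C(I, R)) : C(I, R) :=
  Ring.inverse (1 - pathPrimitive ∘L pathBilin (.mul ℝ R) a) 1

/-- The pointwise inverse of the ordered exponential. -/
noncomputable def orderedExpInv (a : C(I, R)) : C(I, R) := Ring.inverse (orderedExp a)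

variable [CompleteSpace R]

theorem orderedExp_eq_one_add (a : C(I, R)) :
    orderedExp a = 1 + pathPrimitive (a * orderedExp a) :=
  eq_add_pathPrimitive_of_inverse (norm_mul_apply_le a) 1

@[simp]
theorem orderedExp_apply_zero (a : C(I, R)) : orderedExp a 0 = 1 := by
  rw [orderedExp_eq_one_add]
  simp

theorem hasPathDeriv_orderedExp (a : C(I, R)) :
    HasPathDeriv (orderedExp a) (a * orderedExp a) := by
  have h := (HasPathDeriv.const (1 : R)).add (hasPathDeriv_pathPrimitive (a * orderedExp a))
  rw [zero_add, show ContinuousMap.const I (1 : R) + pathPrimitive (a * orderedExp a) =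
    orderedExp a from (orderedExp_eq_one_add a).symm] at h
  exact h

theorem HasPathDeriv.eq_of_left_linear {a c X Z : C(I, R)} (hX : HasPathDeriv X (a * X + c))
    (hZ : HasPathDeriv Z (a * Z + c)) (h0 : X 0 = Z 0) : X = Z := by
  refine sub_eq_zero.1 (HasPathDeriv.eq_zero_of_linear (norm_mul_apply_le a)
    ((hX.sub hZ).congr_deriv ?_) (sub_eq_zero.2 h0))
  ext t
  change a t * X t + c t - (a t * Z t + c t) = a t * (X t - Z t)
  noncomm_ring

theorem HasPathDeriv.eq_orderedExp {a X : C(I, R)} (hX : HasPathDeriv X (a * X))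
    (h0 : X 0 = 1) : X = orderedExp a :=
  HasPathDeriv.eq_of_left_linear (c := 0) (hX.congr_deriv (add_zero _).symm)
    ((hasPathDeriv_orderedExp a).congr_deriv (add_zero _).symm)
    (h0.trans (orderedExp_apply_zero a).symm)

theorem isUnit_orderedExp (a : C(I, R)) : IsUnit (orderedExp a) := by
  set X := orderedExp a
  have hX : HasPathDeriv X (a * X) := hasPathDeriv_orderedExp a
  have neg_bound (f : C(I, R)) (t : I) :
      ‖(-(pathBilin (.mul ℝ R)).flip a) f t‖ ≤ ‖a‖₊ * ‖f t‖ := by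
    simpa using norm_mul_flip_apply_le a f t
  obtain ⟨Y, hY0, hY⟩ := exists_hasPathDeriv_linear neg_bound (1 : R)
  replace hY : HasPathDeriv Y (-(Y * a)) := hY
  have left_inv : Y * X = 1 := by
    refine ((hY.mul hX).congr_deriv ?_).eq_of_apply_zero_eq (.const 1) (by simp [X, hY0])
    ext t
    change Y t * (a t * X t) + -(Y t * a t) * X t = 0
    noncomm_ring
  have commutator_bound (f : C(I, R)) (t : I) :
      ‖(pathBilin (.mul ℝ R) a - (pathBilin (.mul ℝ R)).flip a) f t‖ ≤
        (‖a‖₊ + ‖a‖₊ : NNReal) * ‖f t‖ := by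
    rw [NNReal.coe_add, add_mul]
    exact (norm_sub_le _ _).trans
      (add_le_add (norm_mul_apply_le a f t) (norm_mul_flip_apply_le a f t))
  -- `X Y - 1` solves the homogeneous equation `Z' = a Z - Z a`.
  have right_inv : X * Y - 1 = 0 := by
    refine HasPathDeriv.eq_zero_of_linear commutator_bound
      (((hX.mul hY).sub (.const 1)).congr_deriv ?_) (by simp [X, hY0])
    ext t
    change X t * -(Y t * a t) + a t * X t * Y t - 0 =
      a t * (X t * Y t - 1) - (X t * Y t - 1) * a t
    noncomm_ring
  exact ⟨⟨X, Y, sub_eq_zero.1 right_inv, left_inv⟩, rfl⟩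

@[simp]
theorem orderedExp_mul_orderedExpInv (a : C(I, R)) : orderedExp a * orderedExpInv a = 1 :=
  Ring.mul_inverse_cancel _ (isUnit_orderedExp a)

@[simp]
theorem orderedExpInv_mul_orderedExp (a : C(I, R)) : orderedExpInv a * orderedExp a = 1 :=
  Ring.inverse_mul_cancel _ (isUnit_orderedExp a)

theorem orderedExpInv_eq_of_mul_eq_one {a Y : C(I, R)} (h : orderedExp a * Y = 1) :
    orderedExpInv a = Y :=
  left_inv_eq_right_inv (orderedExpInv_mul_orderedExp a) h

theorem isUnit_orderedExp_apply (a : C(I, R)) (t : I) : IsUnit (orderedExp a t) :=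
  ⟨⟨orderedExp a t, orderedExpInv a t, congr($(orderedExp_mul_orderedExpInv a) t),
    congr($(orderedExpInv_mul_orderedExp a) t)⟩, rfl⟩

theorem orderedExpInv_apply (a : C(I, R)) (t : I) :
    orderedExpInv a t = Ring.inverse (orderedExp a t) :=
  left_inv_eq_right_inv congr($(orderedExpInv_mul_orderedExp a) t)
    (Ring.mul_inverse_cancel _ (isUnit_orderedExp_apply a t))

@[simp]
theorem orderedExpInv_apply_zero (a : C(I, R)) : orderedExpInv a 0 = 1 := by
  rw [orderedExpInv_apply, orderedExp_apply_zero, Ring.inverse_one]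

theorem contDiff_orderedExp : ContDiff ℝ 1 (orderedExp : C(I, R) → C(I, R)) := by
  refine contDiff_iff_contDiffAt.2 fun a => ?_
  obtain ⟨u, hu⟩ := isUnit_one_sub_pathPrimitive_comp (norm_mul_apply_le a)
  have h := contDiffAt_ringInverse (n := 1) (R := C(I, R) →L[ℝ] C(I, R)) ℝ u
  rw [hu] at h
  have affine : ContDiffAt ℝ 1 (fun a => 1 - pathPrimitive ∘L pathBilin (.mul ℝ R) a) a := by
    fun_prop
  exact (h.comp a affine).clm_apply contDiffAt_const

theorem contDiff_orderedExpInv : ContDiff ℝ 1 (orderedExpInv : C(I, R) → C(I, R)) :=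
  contDiff_iff_contDiffAt.2 fun a => by
    have h := contDiffAt_ringInverse (n := 1) ℝ (isUnit_orderedExp a).unit
    exact h.comp a contDiff_orderedExp.contDiffAt

theorem hasDerivWithinAt_ringInverse {f : ℝ → R} {f' : R} {s : Set ℝ} {t : ℝ}
    (hf : HasDerivWithinAt f f' s t) (hu : IsUnit (f t)) :
    HasDerivWithinAt (fun t => Ring.inverse (f t))
      (-(Ring.inverse (f t) * f' * Ring.inverse (f t))) s t := by
  obtain ⟨u, hu⟩ := hu
  have h := hasFDerivAt_ringInverse (𝕜 := ℝ) u
  rw [hu] at h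
  refine (h.comp_hasDerivWithinAt t hf).congr_deriv ?_
  simp [← hu]

theorem hasPathDeriv_orderedExpInv (a : C(I, R)) :
    HasPathDeriv (orderedExpInv a) (-(orderedExpInv a * a)) := fun t ht => by
  have h := hasDerivWithinAt_ringInverse (hasPathDeriv_orderedExp a t ht)
    (isUnit_orderedExp_apply a _)
  have inverse_eq (u : ℝ) :
      Ring.inverse (pathExt (orderedExp a) u) = pathExt (orderedExpInv a) u :=
    (orderedExpInv_apply a _).symm
  refine (h.congr_deriv ?_).congr_of_eventuallyEq
    (.of_forall fun u => (inverse_eq u).symm) (inverse_eq t).symm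
  have cancel : pathExt (orderedExp a) t * pathExt (orderedExpInv a) t = 1 :=
    congr($(orderedExp_mul_orderedExpInv a) _)
  change -(_ * (pathExt a t * pathExt (orderedExp a) t) * _) =
    -(pathExt (orderedExpInv a) t * pathExt a t)
  rw [inverse_eq, mul_assoc, mul_assoc, cancel, mul_one]

theorem fderiv_orderedExp_apply (a a' : C(I, R)) :
    fderiv ℝ orderedExp a a' =
      pathPrimitive (a * fderiv ℝ orderedExp a a' + a' * orderedExp a) := by
  have h := (contDiff_orderedExp.differentiable one_ne_zero a).hasFDerivAt
  have h_eq : HasFDerivAt orderedExp _ a :=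
    ((pathPrimitive.hasFDerivAt.comp a ((pathBilin (.mul ℝ R)).hasFDerivAt_of_bilinear
      (hasFDerivAt_id a) h)).const_add 1).congr_of_eventuallyEq
        (.of_forall orderedExp_eq_one_add)
  exact congr($(h.unique h_eq) a')

section ParameterDerivative

variable {a : ℝ → C(I, R)} {a' : C(I, R)} {S : Set ℝ} {s : ℝ}

theorem hasDerivWithinAt_orderedExp (ha : HasDerivWithinAt a a' S s) :
    HasDerivWithinAt (fun s => orderedExp (a s))
      (orderedExp (a s) * pathPrimitive (orderedExpInv (a s) * a' * orderedExp (a s))) S s := by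
  set X := orderedExp (a s)
  set Y := orderedExpInv (a s)
  have hXs : HasDerivWithinAt (fun s => orderedExp (a s)) _ S s :=
    (contDiff_orderedExp.differentiable one_ne_zero (a s)).hasFDerivAt.comp_hasDerivWithinAt s ha
  set D := fderiv ℝ orderedExp (a s) a'
  have D_eq : D = pathPrimitive (a s * D + a' * X) := fderiv_orderedExp_apply (a s) a'
  have hD : HasPathDeriv D (a s * D + a' * X) := by
    have := hasPathDeriv_pathPrimitive (a s * D + a' * X)
    rwa [← D_eq] at this
  -- Both `D` and the claimed derivative solve `Z' = a Z + a' X`, `Z 0 = 0`.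
  refine hXs.congr_deriv (hD.eq_of_left_linear
    (((hasPathDeriv_orderedExp (a s)).mul (hasPathDeriv_pathPrimitive _)).congr_deriv ?_) ?_)
  · change X * (Y * a' * X) + a s * X * _ = _
    rw [← mul_assoc, ← mul_assoc, orderedExp_mul_orderedExpInv, one_mul, add_comm, mul_assoc]
  · rw [D_eq]
    simp

theorem hasDerivWithinAt_orderedExpInv (ha : HasDerivWithinAt a a' S s) :
    HasDerivWithinAt (fun s => orderedExpInv (a s))
      (-(pathPrimitive (orderedExpInv (a s) * a' * orderedExp (a s)) * orderedExpInv (a s)))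
      S s := by
  refine (hasDerivWithinAt_ringInverse (hasDerivWithinAt_orderedExp ha)
    (isUnit_orderedExp _)).congr_deriv ?_
  change -(orderedExpInv (a s) * _ * orderedExpInv (a s)) = _
  rw [← mul_assoc, orderedExpInv_mul_orderedExp, one_mul]

end ParameterDerivative

end OrderedExp

section PathTransport

variable {g : Type*} [NormedAddCommGroup g] [NormedSpace ℝ g] {B : g →ₗ[ℝ] g →ₗ[ℝ] g}

theorem IsLieBracket.isAlt (hB : IsLieBracket B) : B.IsAlt := hB.1

theorem IsLieBracket.jacobi (hB : IsLieBracket B) (x y z : g) :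
    B x (B y z) = B (B x y) z + B y (B x z) :=
  hB.2 x y z

theorem IsLieBracket.neg_swap (hB : IsLieBracket B) (x y : g) : -B x y = B y x :=
  hB.isAlt.neg x y

theorem IsLieBracket.apply_central (hB : IsLieBracket B) {x : g} (hx : B x = 0) (y : g) :
    B y x = 0 := by
  rw [← hB.neg_swap, hx, LinearMap.zero_apply, neg_zero]

variable [FiniteDimensional ℝ g]

/-- The adjoint representation, continuous in both arguments. -/
noncomputable def adCLM (B : g →ₗ[ℝ] g →ₗ[ℝ] g) : g →L[ℝ] g →L[ℝ] g :=
  LinearMap.toContinuousBilinearMap B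

/-- The path of endomorphisms `t ↦ ad (γ t)`. -/
noncomputable def adPath (B : g →ₗ[ℝ] g →ₗ[ℝ] g) : C(I, g) →L[ℝ] C(I, g →L[ℝ] g) :=
  (adCLM B).compLeftContinuous ℝ I

@[simp]
theorem adPath_apply (γ : C(I, g)) (t : I) : adPath B γ t = adCLM B (γ t) := rfl

theorem adPath_const_of_central {x : g} (hx : B x = 0) : adPath B (.const I x) = 0 := by
  ext t y
  exact congr($hx y)

/-- The path `A_γ` as an element of the Banach algebra `C([0,1], End g)`. -/
noncomputable def pathTransport (B : g →ₗ[ℝ] g →ₗ[ℝ] g) (γ : C(I, g)) : C(I, g →L[ℝ] g) :=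
  orderedExp (adPath B γ)

/-- The path `t ↦ A_γ(t)⁻¹`. -/
noncomputable def pathTransportInv (B : g →ₗ[ℝ] g →ₗ[ℝ] g) (γ : C(I, g)) : C(I, g →L[ℝ] g) :=
  orderedExpInv (adPath B γ)

@[simp]
theorem pathTransport_apply_zero (γ : C(I, g)) : pathTransport B γ 0 = 1 :=
  orderedExp_apply_zero _

@[simp]
theorem pathTransportInv_apply_zero (γ : C(I, g)) : pathTransportInv B γ 0 = 1 :=
  orderedExpInv_apply_zero _

@[simp]
theorem pathTransport_mul_inv (γ : C(I, g)) : pathTransport B γ * pathTransportInv B γ = 1 :=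
  orderedExp_mul_orderedExpInv _

@[simp]
theorem pathTransportInv_mul (γ : C(I, g)) : pathTransportInv B γ * pathTransport B γ = 1 :=
  orderedExpInv_mul_orderedExp _

@[simp]
theorem pathTransport_apply_inv_apply (γ : C(I, g)) (t : I) (v : g) :
    pathTransport B γ t (pathTransportInv B γ t v) = v :=
  congr($(pathTransport_mul_inv γ) t v)

@[simp]
theorem pathTransportInv_apply_apply (γ : C(I, g)) (t : I) (v : g) :
    pathTransportInv B γ t (pathTransport B γ t v) = v :=
  congr($(pathTransportInv_mul γ) t v)

theorem pathApply_transport_inv (γ δ : C(I, g)) :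
    pathApply (pathTransport B γ) (pathApply (pathTransportInv B γ) δ) = δ := by
  rw [← pathApply_mul, pathTransport_mul_inv, pathApply_one]

theorem hasPathDeriv_pathTransport (γ : C(I, g)) :
    HasPathDeriv (pathTransport B γ) (adPath B γ * pathTransport B γ) :=
  hasPathDeriv_orderedExp _

theorem hasPathDeriv_pathTransportInv (γ : C(I, g)) :
    HasPathDeriv (pathTransportInv B γ) (-(pathTransportInv B γ * adPath B γ)) :=
  hasPathDeriv_orderedExpInv _

theorem contDiff_pathTransport : ContDiff ℝ 1 (pathTransport B) :=
  contDiff_orderedExp.comp (by fun_prop)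

theorem contDiff_pathTransportInv : ContDiff ℝ 1 (pathTransportInv B) :=
  contDiff_orderedExpInv.comp (by fun_prop)

theorem isTransport_pathTransport (γ : C(I, g)) :
    IsTransport B (pathExt γ) (pathExt (pathTransport B γ)) :=
  ⟨pathExt_of_mem _ unitInterval.zero_mem |>.trans (pathTransport_apply_zero γ),
    hasPathDeriv_pathTransport γ,
    (continuous_pathExt (adPath B γ * pathTransport B γ)).continuousOn⟩

theorem IsTransport.eq_pathTransport {γ : C(I, g)} {A : ℝ → g →L[ℝ] g}
    (hA : IsTransport B (pathExt γ) A) (t : I) : A t = pathTransport B γ t := by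
  have hA_cont : ContinuousOn A I := fun t ht => (hA.2.1 t ht).continuousWithinAt
  let Z : C(I, g →L[ℝ] g) := ⟨fun t => A t, hA_cont.domRestrict⟩
  have pathExt_Z {t : ℝ} (ht : t ∈ I) : pathExt Z t = A t := pathExt_of_mem Z ht
  have hZ : HasPathDeriv Z (adPath B γ * Z) := fun t ht => by
    refine ((hA.2.1 t ht).congr (fun u hu => pathExt_Z hu) (pathExt_Z ht)).congr_deriv ?_
    rw [← pathExt_Z ht]
    rfl
  exact congr($(hZ.eq_orderedExp hA.1) t)

theorem transport_pathExt (γ : C(I, g)) (t : I) :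
    transport B (pathExt γ) t = pathTransport B γ t := by
  have ex : ∃ A, IsTransport B (pathExt γ) A := ⟨_, isTransport_pathTransport γ⟩
  refine IsTransport.eq_pathTransport ?_ t
  rw [transport, dif_pos ex]
  exact ex.choose_spec

theorem pathTransport_bracket (hB : IsLieBracket B) (γ : C(I, g)) (t : I) (y z : g) :
    pathTransport B γ t (B y z) = B (pathTransport B γ t y) (pathTransport B γ t z) := by
  set X := pathTransport B γ
  set a := adPath B γ
  have hX : HasPathDeriv X (a * X) := hasPathDeriv_pathTransport γ
  have hXy := (hX.pathApply (.const y)).map (adCLM B)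
  -- Both sides of `X ad y = ad (X y) X` solve `Z' = ad γ Z`, `Z 0 = ad y`.
  have conj : X * adPath B (.const I y) = adPath B (pathApply X (.const I y)) * X := by
    have left_deriv : HasPathDeriv (X * adPath B (.const I y))
        (a * (X * adPath B (.const I y)) + 0) :=
      (hX.mul (.const (adCLM B y))).congr_deriv (by ext; simp [X, a])
    refine left_deriv.eq_of_left_linear ((hXy.mul hX).congr_deriv ?_) (by ext; simp [X])
    ext t z
    change B (X t y) (B (γ t) (X t z)) + B (X t 0 + B (γ t) (X t y)) (X t z) =
      B (γ t) (B (X t y) (X t z)) + 0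
    rw [hB.jacobi (γ t) (X t y) (X t z), map_zero, zero_add, add_zero, add_comm]
  exact congr($conj t z)

theorem pathTransportInv_bracket (hB : IsLieBracket B) (γ : C(I, g)) (t : I) (y z : g) :
    pathTransportInv B γ t (B y z) = B (pathTransportInv B γ t y) (pathTransportInv B γ t z) := by
  have h := pathTransport_bracket hB γ t (pathTransportInv B γ t y) (pathTransportInv B γ t z)
  rw [pathTransport_apply_inv_apply, pathTransport_apply_inv_apply] at h
  rw [← h, pathTransportInv_apply_apply]

theorem pathTransportInv_apply_of_central (hB : IsLieBracket B) (γ : C(I, g)) {x : g}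
    (hx : B x = 0) (t : I) : pathTransportInv B γ t x = x := by
  have h : HasPathDeriv (pathApply (pathTransportInv B γ) (.const I x)) 0 := by
    refine ((hasPathDeriv_pathTransportInv γ).pathApply (.const x)).congr_deriv ?_
    ext t
    change pathTransportInv B γ t 0 + -pathTransportInv B γ t (B (γ t) x) = 0
    rw [hB.apply_central hx, map_zero, neg_zero, add_zero]
  exact congr($(h.eq_of_apply_zero_eq (.const x) (by simp)) t)

theorem pathTransport_apply_of_central (hB : IsLieBracket B) (γ : C(I, g)) {x : g}
    (hx : B x = 0) (t : I) : pathTransport B γ t x = x := by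
  conv_lhs => rw [← pathTransportInv_apply_of_central hB γ hx t, pathTransport_apply_inv_apply]

theorem pathTransport_eq_one {γ : C(I, g)} (hγ : adPath B γ = 0) : pathTransport B γ = 1 := by
  refine .symm (HasPathDeriv.eq_orderedExp
    ((HasPathDeriv.const (1 : g →L[ℝ] g)).congr_deriv ?_) rfl)
  rw [hγ]
  exact (zero_mul (1 : C(I, g →L[ℝ] g))).symm

theorem pathTransportInv_eq_one {γ : C(I, g)} (hγ : adPath B γ = 0) :
    pathTransportInv B γ = 1 := by
  have h := pathTransportInv_mul (B := B) γ
  rw [pathTransport_eq_one hγ] at h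
  exact (mul_one (pathTransportInv B γ)).symm.trans h

end PathTransport

section PathGroup

variable {g : Type*} [NormedAddCommGroup g] [NormedSpace ℝ g] [FiniteDimensional ℝ g]
  {B : g →ₗ[ℝ] g →ₗ[ℝ] g}

/-- The product `γ · δ` of the path group, as an element of `C([0,1], g)`. -/
noncomputable def pathProd (B : g →ₗ[ℝ] g →ₗ[ℝ] g) (γ δ : C(I, g)) : C(I, g) :=
  γ + pathApply (pathTransport B γ) δ

/-- The inverse of `γ` in the path group, as an element of `C([0,1], g)`. -/
noncomputable def pathProdInv (B : g →ₗ[ℝ] g →ₗ[ℝ] g) (γ : C(I, g)) : C(I, g) :=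
  -pathApply (pathTransportInv B γ) γ

@[simp]
theorem pathProd_zero (γ : C(I, g)) : pathProd B γ 0 = γ := by
  rw [pathProd, map_zero, add_zero]

@[simp]
theorem zero_pathProd (γ : C(I, g)) : pathProd B 0 γ = γ := by
  rw [pathProd, pathTransport_eq_one (map_zero _), pathApply_one, zero_add]

theorem pathTransport_pathProd (hB : IsLieBracket B) (γ δ : C(I, g)) :
    pathTransport B (pathProd B γ δ) = pathTransport B γ * pathTransport B δ := by
  refine (HasPathDeriv.eq_orderedExp (((hasPathDeriv_pathTransport γ).mul
    (hasPathDeriv_pathTransport δ)).congr_deriv ?_) ?_).symm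
  · ext t v
    change pathTransport B γ t (B (δ t) (pathTransport B δ t v)) +
        B (γ t) (pathTransport B γ t (pathTransport B δ t v)) =
      B (γ t + pathTransport B γ t (δ t)) (pathTransport B γ t (pathTransport B δ t v))
    rw [pathTransport_bracket hB, map_add, LinearMap.add_apply, add_comm]
  · ext v
    simp

theorem pathTransportInv_pathProd (hB : IsLieBracket B) (γ δ : C(I, g)) :
    pathTransportInv B (pathProd B γ δ) = pathTransportInv B δ * pathTransportInv B γ := by
  refine orderedExpInv_eq_of_mul_eq_one ?_
  rw [← pathTransport, pathTransport_pathProd hB]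
  ext t v
  change pathTransport B γ t (pathTransport B δ t (pathTransportInv B δ t
    (pathTransportInv B γ t v))) = v
  rw [pathTransport_apply_inv_apply, pathTransport_apply_inv_apply]

theorem pathProd_assoc (hB : IsLieBracket B) (γ δ ε : C(I, g)) :
    pathProd B (pathProd B γ δ) ε = pathProd B γ (pathProd B δ ε) := by
  rw [pathProd, pathTransport_pathProd hB, pathApply_mul, pathProd, add_assoc, ← map_add]
  rfl

theorem pathProd_pathProdInv (γ : C(I, g)) : pathProd B γ (pathProdInv B γ) = 0 := by
  rw [pathProd, pathProdInv, map_neg, pathApply_transport_inv, add_neg_cancel]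

theorem pathProdInv_pathProd (hB : IsLieBracket B) (γ : C(I, g)) :
    pathProd B (pathProdInv B γ) γ = 0 := by
  have transport_eq : pathTransport B (pathProdInv B γ) = pathTransportInv B γ := by
    refine .symm (orderedExpInv_eq_of_mul_eq_one ?_)
    rw [← pathTransport, ← pathTransport_pathProd hB, pathProd_pathProdInv,
      pathTransport_eq_one (map_zero _)]
  rw [pathProd, transport_eq, pathProdInv, neg_add_cancel]

theorem pathProd_const_of_central (hB : IsLieBracket B) (γ : C(I, g)) {x : g} (hx : B x = 0) :
    pathProd B γ (.const I x) = γ + .const I x := by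
  ext t
  exact congr(γ t + $(pathTransport_apply_of_central hB γ hx t))

/-- The primitive of `A_γ⁻¹ γ'`. If `γ` moves with velocity `γ'`, then its transport moves with
left logarithmic derivative `A_γ⁻¹ A_γ' = ad (leftLogDeriv B γ γ')`. -/
noncomputable def leftLogDeriv (B : g →ₗ[ℝ] g →ₗ[ℝ] g) (γ : C(I, g)) : C(I, g) →L[ℝ] C(I, g) :=
  pathPrimitive ∘L pathApply (pathTransportInv B γ)

@[simp]
theorem leftLogDeriv_apply_zero (γ γ' : C(I, g)) : leftLogDeriv B γ γ' 0 = 0 :=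
  pathPrimitive_apply_zero _

theorem hasPathDeriv_leftLogDeriv (γ γ' : C(I, g)) :
    HasPathDeriv (leftLogDeriv B γ γ') (pathApply (pathTransportInv B γ) γ') :=
  hasPathDeriv_pathPrimitive _

theorem leftLogDeriv_apply_one (γ γ' : C(I, g)) :
    leftLogDeriv B γ γ' 1 =
      ∫ t in (0 : ℝ)..1, Ring.inverse (transport B (pathExt γ) t) (pathExt γ' t) := by
  refine intervalIntegral.integral_congr fun t ht => ?_
  replace ht : t ∈ I := by simpa using ht
  have transport_eq := transport_pathExt (B := B) γ ⟨t, ht⟩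
  have inv_eq := orderedExpInv_apply (adPath B γ) ⟨t, ht⟩
  rw [pathExt_of_mem _ ht, pathExt_of_mem _ ht]
  exact congr($inv_eq (γ' ⟨t, ht⟩)).trans congr(Ring.inverse $transport_eq.symm (γ' ⟨t, ht⟩))

theorem continuous_leftLogDeriv : Continuous (leftLogDeriv B) :=
  continuous_const.clm_comp
    (pathApply.continuous.comp (contDiff_pathTransportInv (B := B)).continuous)

theorem pathPrimitive_inv_mul_adPath_mul (hB : IsLieBracket B) (γ γ' : C(I, g)) :
    pathPrimitive (pathTransportInv B γ * adPath B γ' * pathTransport B γ) =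
      adPath B (leftLogDeriv B γ γ') := by
  have conj : pathTransportInv B γ * adPath B γ' * pathTransport B γ =
      adPath B (pathApply (pathTransportInv B γ) γ') := by
    ext t v
    change pathTransportInv B γ t (B (γ' t) (pathTransport B γ t v)) = _
    rw [pathTransportInv_bracket hB, pathTransportInv_apply_apply]
    rfl
  rw [conj]
  refine (hasPathDeriv_pathPrimitive _).eq_of_apply_zero_eq
    ((hasPathDeriv_leftLogDeriv γ γ').map (adCLM B)) ?_
  ext
  simp

theorem hasDerivWithinAt_pathTransport (hB : IsLieBracket B) {Γ : ℝ → C(I, g)} {γ' : C(I, g)}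
    {S : Set ℝ} {s : ℝ} (hΓ : HasDerivWithinAt Γ γ' S s) :
    HasDerivWithinAt (fun s => pathTransport B (Γ s))
      (pathTransport B (Γ s) * adPath B (leftLogDeriv B (Γ s) γ')) S s := by
  rw [← pathPrimitive_inv_mul_adPath_mul hB]
  exact hasDerivWithinAt_orderedExp ((adPath B).hasFDerivAt.comp_hasDerivWithinAt s hΓ)

theorem hasDerivWithinAt_pathTransportInv (hB : IsLieBracket B) {Γ : ℝ → C(I, g)} {γ' : C(I, g)}
    {S : Set ℝ} {s : ℝ} (hΓ : HasDerivWithinAt Γ γ' S s) :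
    HasDerivWithinAt (fun s => pathTransportInv B (Γ s))
      (-(adPath B (leftLogDeriv B (Γ s) γ') * pathTransportInv B (Γ s))) S s := by
  rw [← pathPrimitive_inv_mul_adPath_mul hB]
  exact hasDerivWithinAt_orderedExpInv ((adPath B).hasFDerivAt.comp_hasDerivWithinAt s hΓ)

/-- The velocity of the product `γ · δ` when `γ` and `δ` move with velocities `γ'` and `δ'`. -/
noncomputable def pathProdDeriv (B : g →ₗ[ℝ] g →ₗ[ℝ] g) (γ γ' δ δ' : C(I, g)) : C(I, g) :=
  γ' + pathApply (pathTransport B γ)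
    (δ' + pathApply (adPath B (leftLogDeriv B γ γ')) δ)

theorem leftLogDeriv_pathProdDeriv (hB : IsLieBracket B) (γ γ' δ δ' : C(I, g)) :
    leftLogDeriv B (pathProd B γ δ) (pathProdDeriv B γ γ' δ δ') =
      pathApply (pathTransportInv B δ) (leftLogDeriv B γ γ') + leftLogDeriv B δ δ' := by
  refine (hasPathDeriv_leftLogDeriv _ _).eq_of_apply_zero_eq
    ((((hasPathDeriv_pathTransportInv δ).pathApply (hasPathDeriv_leftLogDeriv γ γ')).add
      (hasPathDeriv_leftLogDeriv δ δ')).congr_deriv ?_) (by simp)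
  rw [pathTransportInv_pathProd hB]
  ext t
  set L := leftLogDeriv B γ γ'
  set Y := pathTransportInv B δ t
  set Y₀ := pathTransportInv B γ t with Y₀_def
  change Y (Y₀ (γ' t)) + -Y (B (δ t) (L t)) + Y (δ' t) =
    Y (Y₀ (γ' t + pathTransport B γ t (δ' t + B (L t) (δ t))))
  rw [map_add Y₀, Y₀_def, pathTransportInv_apply_apply, ← hB.neg_swap (L t) (δ t)]
  simp only [map_add, map_neg]
  abel

end PathGroup

section Horizontal

/-- `Γ` is a continuously differentiable curve on `[0,1]` (one-sided derivatives at the endpoints)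
with velocity `Γ'`. -/
structure IsC1Curve {E : Type*} [NormedAddCommGroup E] [NormedSpace ℝ E] (Γ Γ' : ℝ → E) :
    Prop where
  hasDerivWithinAt : ∀ s ∈ I, HasDerivWithinAt Γ (Γ' s) I s
  continuousOn_deriv : ContinuousOn Γ' I

namespace IsC1Curve

variable {E : Type*} [NormedAddCommGroup E] [NormedSpace ℝ E] {Γ Γ' : ℝ → E}

theorem continuousOn (h : IsC1Curve Γ Γ') : ContinuousOn Γ I := fun s hs =>
  (h.hasDerivWithinAt s hs).continuousWithinAt

theorem const (x : E) : IsC1Curve (fun _ => x) 0 :=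
  ⟨fun s _ => hasDerivWithinAt_const s I x, continuousOn_const⟩

theorem comp_affine (h : IsC1Curve Γ Γ') {c d : ℝ} (hcd : MapsTo (fun s => c * s + d) I I) :
    IsC1Curve (fun s => Γ (c * s + d)) (fun s => c • Γ' (c * s + d)) where
  hasDerivWithinAt s hs := by
    have affine : HasDerivWithinAt (fun s => c * s + d) c I s := by
      simpa using (((hasDerivAt_id s).const_mul c).add_const d).hasDerivWithinAt
    exact (h.hasDerivWithinAt _ (hcd hs)).scomp s affine hcd
  continuousOn_deriv :=
    continuousOn_const.smul (h.continuousOn_deriv.comp (by fun_prop) hcd)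

theorem congr_deriv {Γ'' : ℝ → E} (h : IsC1Curve Γ Γ') (he : ∀ s ∈ I, Γ' s = Γ'' s) :
    IsC1Curve Γ Γ'' where
  hasDerivWithinAt s hs := he s hs ▸ h.hasDerivWithinAt s hs
  continuousOn_deriv := h.continuousOn_deriv.congr fun s hs => (he s hs).symm

protected theorem add {Δ Δ' : ℝ → E} (hΓ : IsC1Curve Γ Γ') (hΔ : IsC1Curve Δ Δ') :
    IsC1Curve (fun s => Γ s + Δ s) (fun s => Γ' s + Δ' s) where
  hasDerivWithinAt s hs := (hΓ.hasDerivWithinAt s hs).add (hΔ.hasDerivWithinAt s hs)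
  continuousOn_deriv := hΓ.continuousOn_deriv.add hΔ.continuousOn_deriv

protected theorem pathBilin {F G : Type*} [NormedAddCommGroup F] [NormedSpace ℝ F]
    [NormedAddCommGroup G] [NormedSpace ℝ G] (b : E →L[ℝ] F →L[ℝ] G) {f f' : ℝ → C(I, E)}
    {k k' : ℝ → C(I, F)} (hf : IsC1Curve f f') (hk : IsC1Curve k k') :
    IsC1Curve (fun s => pathBilin b (f s) (k s))
      (fun s => pathBilin b (f s) (k' s) + pathBilin b (f' s) (k s)) where
  hasDerivWithinAt s hs :=
    (pathBilin b).hasDerivWithinAt_of_bilinear (hf.hasDerivWithinAt s hs)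
      (hk.hasDerivWithinAt s hs)
  continuousOn_deriv :=
    (((pathBilin b).continuous.comp_continuousOn hf.continuousOn).clm_apply
      hk.continuousOn_deriv).add
    (((pathBilin b).continuous.comp_continuousOn hf.continuousOn_deriv).clm_apply hk.continuousOn)

protected theorem pathApply {F : Type*} [NormedAddCommGroup F] [NormedSpace ℝ F]
    {A A' : ℝ → C(I, E →L[ℝ] F)} {f f' : ℝ → C(I, E)} (hA : IsC1Curve A A')
    (hf : IsC1Curve f f') :
    IsC1Curve (fun s => pathApply (A s) (f s))
      (fun s => pathApply (A s) (f' s) + pathApply (A' s) (f s)) :=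
  hA.pathBilin _ hf

protected theorem mul {R : Type*} [NormedRing R] [NormedAlgebra ℝ R] {X X' Y Y' : ℝ → C(I, R)}
    (hX : IsC1Curve X X') (hY : IsC1Curve Y Y') :
    IsC1Curve (fun s => X s * Y s) (fun s => X s * Y' s + X' s * Y s) :=
  hX.pathBilin (.mul ℝ R) hY

protected theorem map {F : Type*} [NormedAddCommGroup F] [NormedSpace ℝ F] (L : E →L[ℝ] F)
    (h : IsC1Curve Γ Γ') : IsC1Curve (fun s => L (Γ s)) (fun s => L (Γ' s)) where
  hasDerivWithinAt s hs := L.hasFDerivAt.comp_hasDerivWithinAt s (h.hasDerivWithinAt s hs)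
  continuousOn_deriv := L.continuous.comp_continuousOn h.continuousOn_deriv

protected theorem eval {f f' : ℝ → C(I, E)} (hf : IsC1Curve f f') (t : I) :
    IsC1Curve (fun s => f s t) (fun s => f' s t) :=
  hf.map (ContinuousMap.evalCLM ℝ t : C(I, E) →L[ℝ] E)

theorem integral_deriv [CompleteSpace E] (h : IsC1Curve Γ Γ') :
    ∫ s in (0 : ℝ)..1, Γ' s = Γ 1 - Γ 0 :=
  intervalIntegral.integral_eq_sub_of_hasDerivAt_of_le zero_le_one h.continuousOn
    (fun s hs => (h.hasDerivWithinAt s (Ioo_subset_Icc_self hs)).hasDerivAt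
      (Icc_mem_nhds hs.1 hs.2))
    (h.continuousOn_deriv.intervalIntegrable_of_Icc zero_le_one)

end IsC1Curve

variable {g : Type*} [NormedAddCommGroup g] [NormedSpace ℝ g] [FiniteDimensional ℝ g]
  {B : g →ₗ[ℝ] g →ₗ[ℝ] g}

section

variable {Γ Γ' Δ Δ' : ℝ → C(I, g)}

theorem IsC1Curve.continuousOn_pathTransport (h : IsC1Curve Γ Γ') :
    ContinuousOn (fun s => pathTransport B (Γ s)) I :=
  contDiff_pathTransport.continuous.comp_continuousOn h.continuousOn

theorem IsC1Curve.continuousOn_pathTransportInv (h : IsC1Curve Γ Γ') :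
    ContinuousOn (fun s => pathTransportInv B (Γ s)) I :=
  contDiff_pathTransportInv.continuous.comp_continuousOn h.continuousOn

theorem IsC1Curve.continuousOn_leftLogDeriv (h : IsC1Curve Γ Γ') :
    ContinuousOn (fun s => leftLogDeriv B (Γ s) (Γ' s)) I :=
  (continuous_leftLogDeriv.comp_continuousOn h.continuousOn).clm_apply h.continuousOn_deriv

protected theorem IsC1Curve.pathTransport (hB : IsLieBracket B) (h : IsC1Curve Γ Γ') :
    IsC1Curve (fun s => pathTransport B (Γ s))
      (fun s => pathTransport B (Γ s) * adPath B (leftLogDeriv B (Γ s) (Γ' s))) where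
  hasDerivWithinAt s hs := hasDerivWithinAt_pathTransport hB (h.hasDerivWithinAt s hs)
  continuousOn_deriv := h.continuousOn_pathTransport.mul
    ((adPath B).continuous.comp_continuousOn h.continuousOn_leftLogDeriv)

protected theorem IsC1Curve.pathTransportInv (hB : IsLieBracket B) (h : IsC1Curve Γ Γ') :
    IsC1Curve (fun s => pathTransportInv B (Γ s))
      (fun s => -(adPath B (leftLogDeriv B (Γ s) (Γ' s)) * pathTransportInv B (Γ s))) where
  hasDerivWithinAt s hs := hasDerivWithinAt_pathTransportInv hB (h.hasDerivWithinAt s hs)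
  continuousOn_deriv := (((adPath B).continuous.comp_continuousOn
    h.continuousOn_leftLogDeriv).mul h.continuousOn_pathTransportInv).neg

protected theorem IsC1Curve.pathProd (hB : IsLieBracket B) (hΓ : IsC1Curve Γ Γ')
    (hΔ : IsC1Curve Δ Δ') :
    IsC1Curve (fun s => pathProd B (Γ s) (Δ s))
      (fun s => pathProdDeriv B (Γ s) (Γ' s) (Δ s) (Δ' s)) := by
  refine (hΓ.add ((hΓ.pathTransport hB).pathApply hΔ)).congr_deriv fun s _ => ?_
  rw [pathApply_mul, ← map_add]
  rfl

end

/-- A curve of paths along which the defining integral of `P(g)₀` vanishes. -/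
structure IsHorizontal (B : g →ₗ[ℝ] g →ₗ[ℝ] g) (Γ Γ' : ℝ → C(I, g)) : Prop
    extends IsC1Curve Γ Γ' where
  leftLogDeriv_apply_one : ∀ s ∈ I, leftLogDeriv B (Γ s) (Γ' s) 1 = 0

theorem inPathZero_iff {γ : C(I, g)} :
    InPathZero B γ ↔ ∃ Γ Γ', IsHorizontal B Γ Γ' ∧ Γ 0 = 0 ∧ Γ 1 = γ := by
  simp only [InPathZero, ← leftLogDeriv_apply_one]
  constructor
  · rintro ⟨Γ, Γ', hderiv, hcont, h0, h1, hint⟩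
    exact ⟨Γ, Γ', ⟨⟨hderiv, hcont⟩, hint⟩, h0, h1⟩
  · rintro ⟨Γ, Γ', ⟨⟨hderiv, hcont⟩, hint⟩, h0, h1⟩
    exact ⟨Γ, Γ', hderiv, hcont, h0, h1, hint⟩

namespace IsHorizontal

variable {Γ Γ' Δ Δ' : ℝ → C(I, g)}

theorem const (γ : C(I, g)) : IsHorizontal B (fun _ => γ) 0 where
  toIsC1Curve := .const γ
  leftLogDeriv_apply_one _ _ := by simp

theorem comp_affine (h : IsHorizontal B Γ Γ') {c d : ℝ}
    (hcd : MapsTo (fun s => c * s + d) I I) :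
    IsHorizontal B (fun s => Γ (c * s + d)) (fun s => c • Γ' (c * s + d)) where
  toIsC1Curve := h.toIsC1Curve.comp_affine hcd
  leftLogDeriv_apply_one s hs := by
    rw [map_smul, ContinuousMap.smul_apply, h.leftLogDeriv_apply_one _ (hcd hs), smul_zero]

theorem pathProd (hB : IsLieBracket B) (hΓ : IsHorizontal B Γ Γ') (hΔ : IsHorizontal B Δ Δ') :
    IsHorizontal B (fun s => pathProd B (Γ s) (Δ s))
      (fun s => pathProdDeriv B (Γ s) (Γ' s) (Δ s) (Δ' s)) where
  toIsC1Curve := hΓ.toIsC1Curve.pathProd hB hΔ.toIsC1Curve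
  leftLogDeriv_apply_one s hs := by
    rw [leftLogDeriv_pathProdDeriv hB, ContinuousMap.add_apply, pathApply_apply,
      hΓ.leftLogDeriv_apply_one s hs, hΔ.leftLogDeriv_apply_one s hs, map_zero, add_zero]

theorem pathTransport_apply_one_eq (hB : IsLieBracket B) (h : IsHorizontal B Γ Γ') :
    pathTransport B (Γ 1) 1 = pathTransport B (Γ 0) 1 := by
  have deriv_zero : IsC1Curve (fun s => pathTransport B (Γ s) 1) 0 :=
    ((h.toIsC1Curve.pathTransport hB).eval 1).congr_deriv fun s hs => by
      change pathTransport B (Γ s) 1 * adCLM B (leftLogDeriv B (Γ s) (Γ' s) 1) = 0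
      rw [h.leftLogDeriv_apply_one s hs, map_zero, mul_zero]
  refine sub_eq_zero.1 (deriv_zero.integral_deriv.symm.trans ?_)
  exact intervalIntegral.integral_zero

end IsHorizontal

theorem InPathZero.pathTransport_apply_one (hB : IsLieBracket B) {γ : C(I, g)}
    (h : InPathZero B γ) : pathTransport B γ 1 = 1 := by
  obtain ⟨Γ, Γ', hΓ, h0, rfl⟩ := inPathZero_iff.1 h
  rw [hΓ.pathTransport_apply_one_eq hB, h0, pathTransport_eq_one (map_zero _)]
  rfl

theorem inPathZero_zero : InPathZero B (0 : C(I, g)) :=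
  inPathZero_iff.2 ⟨_, _, .const 0, rfl, rfl⟩

theorem InPathZero.pathProd (hB : IsLieBracket B) {γ δ : C(I, g)} (hγ : InPathZero B γ)
    (hδ : InPathZero B δ) : InPathZero B (pathProd B γ δ) := by
  obtain ⟨Γ, Γ', hΓ, hΓ0, rfl⟩ := inPathZero_iff.1 hγ
  obtain ⟨Δ, Δ', hΔ, hΔ0, rfl⟩ := inPathZero_iff.1 hδ
  exact inPathZero_iff.2 ⟨_, _, hΓ.pathProd hB hΔ, by simp [hΓ0, hΔ0], rfl⟩

theorem InPathZero.pathProdInv (hB : IsLieBracket B) {γ : C(I, g)} (hγ : InPathZero B γ) :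
    InPathZero B (pathProdInv B γ) := by
  obtain ⟨Γ, Γ', hΓ, h0, rfl⟩ := inPathZero_iff.1 hγ
  have reversed : IsHorizontal B (fun s => Γ (-1 * s + 1)) _ :=
    hΓ.comp_affine fun s hs => ⟨by linarith [hs.2], by linarith [hs.1]⟩
  refine inPathZero_iff.2 ⟨_, _, (IsHorizontal.const (_root_.pathProdInv B (Γ 1))).pathProd hB
    reversed, ?_, ?_⟩
  · simp [pathProdInv_pathProd hB]
  · simp [h0]

theorem isPathConnected_inPathZero : IsPathConnected {γ : C(I, g) | InPathZero B γ} := by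
  refine ⟨0, inPathZero_zero, fun {γ} hγ => ?_⟩
  obtain ⟨Γ, Γ', hΓ, h0, rfl⟩ := inPathZero_iff.1 hγ
  refine JoinedIn.ofLine hΓ.continuousOn h0 rfl ?_
  rintro _ ⟨u, hu, rfl⟩
  have scaled : IsHorizontal B (fun s => Γ (u * s + 0)) _ := hΓ.comp_affine fun s hs => by
    simpa using unitInterval.mul_mem hu hs
  exact inPathZero_iff.2 ⟨_, _, scaled, by simp [h0], by simp⟩

end Horizontal

section ExteriorPath

open ExteriorAlgebra

/-- A submultiplicative norm on the exterior algebra of a finite-dimensional space, pulled back from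
the matrices of the left multiplications. -/
@[reducible]
noncomputable def exteriorNormedRing (g : Type*) [AddCommGroup g] [Module ℝ g]
    [FiniteDimensional ℝ g] : NormedRing (ExteriorAlgebra ℝ g) :=
  letI := Matrix.linftyOpNormedRing (n := Fin (Module.finrank ℝ (ExteriorAlgebra ℝ g))) (α := ℝ)
  .induced _ _ (Algebra.leftMulMatrix (Module.finBasis ℝ (ExteriorAlgebra ℝ g)))
    (Algebra.leftMulMatrix_injective _)

attribute [local instance] exteriorNormedRing

/-- The normed algebra structure accompanying `exteriorNormedRing`. -/
@[reducible]
noncomputable def exteriorNormedAlgebra (g : Type*) [AddCommGroup g] [Module ℝ g]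
    [FiniteDimensional ℝ g] : NormedAlgebra ℝ (ExteriorAlgebra ℝ g) :=
  letI := Matrix.linftyOpNormedRing (n := Fin (Module.finrank ℝ (ExteriorAlgebra ℝ g))) (α := ℝ)
  letI := Matrix.linftyOpNormedAlgebra (n := Fin (Module.finrank ℝ (ExteriorAlgebra ℝ g)))
    (R := ℝ) (α := ℝ)
  .induced ℝ _ _ (Algebra.leftMulMatrix (Module.finBasis ℝ (ExteriorAlgebra ℝ g)))

attribute [local instance] exteriorNormedAlgebra

variable {g : Type*} [NormedAddCommGroup g] [NormedSpace ℝ g] [FiniteDimensional ℝ g]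
  {B : g →ₗ[ℝ] g →ₗ[ℝ] g}

/-- The path `t ↦ ι (f t)` in the exterior algebra. -/
noncomputable def pathι : C(I, g) →L[ℝ] C(I, ExteriorAlgebra ℝ g) :=
  (LinearMap.toContinuousLinearMap (ι ℝ : g →ₗ[ℝ] ExteriorAlgebra ℝ g)).compLeftContinuous ℝ I

@[simp]
theorem pathι_apply (f : C(I, g)) (t : I) : pathι f t = ι ℝ (f t) := rfl

/-- The extension `θ_y` of `ad y` to a derivation of the exterior algebra, continuous in both
arguments. -/
noncomputable def exteriorAdCLM (B : g →ₗ[ℝ] g →ₗ[ℝ] g) :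
    g →L[ℝ] ExteriorAlgebra ℝ g →L[ℝ] ExteriorAlgebra ℝ g :=
  LinearMap.toContinuousBilinearMap
    { toFun y := exteriorDerivation (B y)
      map_add' _ _ := by rw [map_add, exteriorDerivation_add]
      map_smul' _ _ := by rw [map_smul, exteriorDerivation_smul]; rfl }

/-- For a path `S` of endomorphisms and `v` in the exterior algebra, the path `t ↦ Λ(S t) v`. -/
noncomputable def exteriorPath (S : C(I, g →L[ℝ] g)) :
    ExteriorAlgebra ℝ g →ₐ[ℝ] C(I, ExteriorAlgebra ℝ g) :=
  ExteriorAlgebra.lift ℝ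
    ⟨(pathι ∘L pathApply S ∘L .const ℝ I).toLinearMap, fun m => by
      ext t
      exact ι_sq_zero _⟩

theorem exteriorPath_ι_mul (S : C(I, g →L[ℝ] g)) (m : g) (v : ExteriorAlgebra ℝ g) :
    exteriorPath S (ι ℝ m * v) = pathι (pathApply S (.const I m)) * exteriorPath S v :=
  (map_mul _ _ _).trans <| congrArg (· * _) (lift_ι_apply ℝ _ _ m)

theorem exteriorPath_apply (S : C(I, g →L[ℝ] g)) (v : ExteriorAlgebra ℝ g) (t : I) :
    exteriorPath S v t = map (S t).toLinearMap v := by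
  induction v using exteriorAlgebra_left_induction with
  | algebraMap r => rw [AlgHom.commutes, AlgHom.commutes]; rfl
  | add v w hv hw => rw [map_add, map_add, ContinuousMap.add_apply, hv, hw]
  | ι_mul m v hv =>
    rw [exteriorPath_ι_mul, map_mul, map_apply_ι, ← hv]
    rfl

protected theorem HasPathDeriv.exteriorPath {S : C(I, g →L[ℝ] g)} {b : C(I, g)}
    (hS : HasPathDeriv S (-(adPath B b * S))) (v : ExteriorAlgebra ℝ g) :
    HasPathDeriv (exteriorPath S v) (-pathBilin (exteriorAdCLM B) b (exteriorPath S v)) := by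
  induction v using exteriorAlgebra_left_induction with
  | algebraMap r =>
    rw [AlgHom.commutes]
    refine (HasPathDeriv.const (algebraMap ℝ (ExteriorAlgebra ℝ g) r)).congr_deriv ?_
    ext t
    exact (neg_eq_zero.2 (exteriorDerivation_algebraMap _ r)).symm
  | add v w hv hw =>
    rw [map_add]
    refine (hv.add hw).congr_deriv ?_
    rw [map_add, neg_add]
  | ι_mul m v hv =>
    rw [exteriorPath_ι_mul]
    refine (((hS.pathApply (.const m)).map _).mul hv).congr_deriv ?_
    ext t
    set w := _root_.exteriorPath S v t
    change ι ℝ (S t m) * -exteriorDerivation (B (b t)) w +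
      ι ℝ (S t 0 + -B (b t) (S t m)) * w = -exteriorDerivation (B (b t)) (ι ℝ (S t m) * w)
    rw [exteriorDerivation_ι_mul, map_zero, zero_add, map_neg]
    noncomm_ring

protected theorem IsC1Curve.exteriorPath {S : ℝ → C(I, g →L[ℝ] g)} {a : ℝ → C(I, g)}
    (hS : IsC1Curve S fun s => -(adPath B (a s) * S s)) (v : ExteriorAlgebra ℝ g) :
    IsC1Curve (fun s => exteriorPath (S s) v)
      (fun s => -pathBilin (exteriorAdCLM B) (a s) (exteriorPath (S s) v)) := by
  induction v using exteriorAlgebra_left_induction with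
  | algebraMap r =>
    simp only [AlgHom.commutes]
    refine (IsC1Curve.const _).congr_deriv fun s _ => ?_
    ext t
    exact (neg_eq_zero.2 (exteriorDerivation_algebraMap _ r)).symm
  | add v w hv hw =>
    simp only [map_add]
    refine (hv.add hw).congr_deriv fun s _ => ?_
    rw [neg_add]
  | ι_mul m v hv =>
    simp only [exteriorPath_ι_mul]
    refine (((hS.pathApply (.const (.const I m))).map pathι).mul hv).congr_deriv fun s _ => ?_
    ext t
    set w := _root_.exteriorPath (S s) v t
    change ι ℝ (S s t m) * -exteriorDerivation (B (a s t)) w +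
      ι ℝ (S s t 0 + -B (a s t) (S s t m)) * w =
        -exteriorDerivation (B (a s t)) (ι ℝ (S s t m) * w)
    rw [exteriorDerivation_ι_mul, map_zero, zero_add, map_neg]
    noncomm_ring

/-- The path `b ∧ Λ(S) v`, where `S = A_γ⁻¹` and `b = A_γ⁻¹ γ`. -/
noncomputable def pathWedge (B : g →ₗ[ℝ] g →ₗ[ℝ] g) (γ : C(I, g)) (v : ExteriorAlgebra ℝ g) :
    C(I, ExteriorAlgebra ℝ g) :=
  pathι (pathApply (pathTransportInv B γ) γ) * exteriorPath (pathTransportInv B γ) v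

/-- The path `a ∧ b ∧ Λ(S) v`, where `S = A_γ⁻¹`, `b = A_γ⁻¹ γ` and `a` is the primitive of
`A_γ⁻¹ γ'`. -/
noncomputable def periodDensity (B : g →ₗ[ℝ] g →ₗ[ℝ] g) (γ γ' : C(I, g))
    (v : ExteriorAlgebra ℝ g) : C(I, ExteriorAlgebra ℝ g) :=
  pathι (leftLogDeriv B γ γ') * pathWedge B γ v

/-- The operator `v ↦ ∫₀¹∫₀¹ a ∧ b ∧ Λ(S) v dt ds` of a curve `Γ` of paths with velocity `Γ'`:
the integral over the square of the wedge of the two components of the flat connection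
`a ds + b dt`, transported back to the origin by `S`. -/
noncomputable def period (B : g →ₗ[ℝ] g →ₗ[ℝ] g) (Γ Γ' : ℝ → C(I, g))
    (v : ExteriorAlgebra ℝ g) : ExteriorAlgebra ℝ g :=
  ∫ s in (0 : ℝ)..1, pathPrimitive (periodDensity B (Γ s) (Γ' s) v) 1

theorem hasPathDeriv_pathTransportInv_left (hB : IsLieBracket B) (γ : C(I, g)) :
    HasPathDeriv (pathTransportInv B γ)
      (-(adPath B (pathApply (pathTransportInv B γ) γ) * pathTransportInv B γ)) := by
  refine (hasPathDeriv_pathTransportInv γ).congr_deriv ?_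
  ext t v
  exact congr(-$(pathTransportInv_bracket hB γ t (γ t) v))

/-- The velocity of `pathWedge B γ v` when `γ` moves with velocity `γ'`. -/
noncomputable def pathWedgeDeriv (B : g →ₗ[ℝ] g →ₗ[ℝ] g) (γ γ' : C(I, g))
    (v : ExteriorAlgebra ℝ g) : C(I, ExteriorAlgebra ℝ g) :=
  pathι (pathApply (pathTransportInv B γ) γ) *
      -pathBilin (exteriorAdCLM B) (leftLogDeriv B γ γ') (exteriorPath (pathTransportInv B γ) v) +
    pathι (pathApply (pathTransportInv B γ) γ' +
      pathApply (-(adPath B (leftLogDeriv B γ γ') * pathTransportInv B γ)) γ) *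
      exteriorPath (pathTransportInv B γ) v

protected theorem IsC1Curve.pathWedge (hB : IsLieBracket B) {Γ Γ' : ℝ → C(I, g)}
    (h : IsC1Curve Γ Γ') (v : ExteriorAlgebra ℝ g) :
    IsC1Curve (fun s => pathWedge B (Γ s) v) (fun s => pathWedgeDeriv B (Γ s) (Γ' s) v) :=
  (((h.pathTransportInv hB).pathApply h).map pathι).mul ((h.pathTransportInv hB).exteriorPath v)

theorem ceBoundary_exteriorPath_pathTransportInv (hB : IsLieBracket B) (γ : C(I, g))
    (v : ExteriorAlgebra ℝ g) (t : I) :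
    ceBoundary B hB.isAlt (exteriorPath (pathTransportInv B γ) v t) =
      exteriorPath (pathTransportInv B γ) (ceBoundary B hB.isAlt v) t := by
  rw [exteriorPath_apply, exteriorPath_apply]
  exact ceBoundary_map (fun x y => (pathTransportInv_bracket hB γ t x y).symm) v

/-- The Chevalley–Eilenberg boundary as a continuous operator. -/
noncomputable def ceBoundaryCLM (hB : IsLieBracket B) :
    ExteriorAlgebra ℝ g →L[ℝ] ExteriorAlgebra ℝ g :=
  LinearMap.toContinuousLinearMap (ceBoundary B hB.isAlt)

-- The infinitesimal Stokes formula: flatness of `a ds + b dt` is what makes the terms match.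
theorem hasPathDeriv_leftLogDeriv_mul_exteriorPath (hB : IsLieBracket B) (γ γ' : C(I, g))
    (v : ExteriorAlgebra ℝ g) :
    HasPathDeriv (pathι (leftLogDeriv B γ γ') * exteriorPath (pathTransportInv B γ) v)
      ((ceBoundaryCLM hB).compLeftContinuous ℝ I (periodDensity B γ γ' v) -
        periodDensity B γ γ' (ceBoundary B hB.isAlt v) + pathWedgeDeriv B γ γ' v) := by
  refine (((hasPathDeriv_leftLogDeriv γ γ').map _).mul
    ((hasPathDeriv_pathTransportInv_left hB γ).exteriorPath v)).congr_deriv ?_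
  ext t
  have boundary_w := ceBoundary_exteriorPath_pathTransportInv hB γ v t
  set a := leftLogDeriv B γ γ' t
  set b := pathTransportInv B γ t (γ t)
  set c := pathTransportInv B γ t (γ' t)
  set w := exteriorPath (pathTransportInv B γ) v t
  change ι ℝ a * -exteriorDerivation (B b) w + ι ℝ c * w =
    ceBoundary B hB.isAlt (ι ℝ a * (ι ℝ b * w)) -
      ι ℝ a * (ι ℝ b * exteriorPath (pathTransportInv B γ) (ceBoundary B hB.isAlt v) t) +
      (ι ℝ b * -exteriorDerivation (B a) w + ι ℝ (c + -B a b) * w)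
  rw [← boundary_w, ceBoundary_ι_mul, ceBoundary_ι_mul, exteriorDerivation_ι_mul, map_add, map_neg]
  noncomm_ring

theorem IsHorizontal.ceBoundary_pathPrimitive_periodDensity (hB : IsLieBracket B)
    {Γ Γ' : ℝ → C(I, g)} (h : IsHorizontal B Γ Γ') {s : ℝ} (hs : s ∈ I)
    (v : ExteriorAlgebra ℝ g) :
    ceBoundaryCLM hB (pathPrimitive (periodDensity B (Γ s) (Γ' s) v) 1) =
      pathPrimitive (periodDensity B (Γ s) (Γ' s) (ceBoundary B hB.isAlt v)) 1 -
        pathPrimitive (pathWedgeDeriv B (Γ s) (Γ' s) v) 1 := by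
  have hderiv := hasPathDeriv_leftLogDeriv_mul_exteriorPath hB (Γ s) (Γ' s) v
  set f := pathι (leftLogDeriv B (Γ s) (Γ' s)) * exteriorPath (pathTransportInv B (Γ s)) v with hf
  have f_zero : f 0 = 0 := by simp [hf]
  have f_one : f 1 = 0 := by simp [hf, h.leftLogDeriv_apply_one s hs]
  have total_deriv := congr($(hderiv.eq_const_add_pathPrimitive) 1)
  rw [f_zero, ContinuousMap.add_apply, f_one, ContinuousMap.const_apply, zero_add, map_add,
    map_sub, ContinuousMap.add_apply, ContinuousMap.sub_apply, ← map_pathPrimitive] at total_deriv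
  rw [eq_sub_iff_add_eq, ← sub_eq_zero, add_sub_right_comm]
  exact total_deriv.symm

theorem IsC1Curve.intervalIntegrable_periodDensity (hB : IsLieBracket B) {Γ Γ' : ℝ → C(I, g)}
    (h : IsC1Curve Γ Γ') (v : ExteriorAlgebra ℝ g) :
    IntervalIntegrable (fun s => pathPrimitive (periodDensity B (Γ s) (Γ' s) v) 1) volume 0 1 :=
  ((continuous_eval_const 1).comp_continuousOn (pathPrimitive.continuous.comp_continuousOn
    ((pathι.continuous.comp_continuousOn h.continuousOn_leftLogDeriv).mul
      (h.pathWedge hB v).continuousOn))).intervalIntegrable_of_Icc zero_le_one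

theorem pathWedge_zero (v : ExteriorAlgebra ℝ g) : pathWedge B 0 v = 0 := by
  rw [pathWedge, map_zero, map_zero, zero_mul]

theorem pathWedge_const_of_central {x : g} (hx : B x = 0) (v : ExteriorAlgebra ℝ g) :
    pathWedge B (.const I x) v = .const I (ι ℝ x * v) := by
  rw [pathWedge, pathTransportInv_eq_one (adPath_const_of_central hx)]
  ext t
  change ι ℝ x * exteriorPath 1 v t = ι ℝ x * v
  rw [exteriorPath_apply]
  exact congr(ι ℝ x * $(ExteriorAlgebra.map_id) v)

theorem IsHorizontal.ceBoundary_period (hB : IsLieBracket B) {Γ Γ' : ℝ → C(I, g)}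
    (h : IsHorizontal B Γ Γ') (h0 : Γ 0 = 0) {x : g} (hx : B x = 0) (h1 : Γ 1 = .const I x)
    (v : ExteriorAlgebra ℝ g) :
    ceBoundary B hB.isAlt (period B Γ Γ' v) =
      period B Γ Γ' (ceBoundary B hB.isAlt v) - ι ℝ x * v := by
  have wedge_curve : IsC1Curve (fun s => pathPrimitive (pathWedge B (Γ s) v) 1)
      (fun s => pathPrimitive (pathWedgeDeriv B (Γ s) (Γ' s) v) 1) :=
    ((h.pathWedge hB v).map pathPrimitive).eval 1
  have wedge_integral :
      ∫ s in (0 : ℝ)..1, pathPrimitive (pathWedgeDeriv B (Γ s) (Γ' s) v) 1 = ι ℝ x * v := by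
    rw [wedge_curve.integral_deriv, h0, h1, pathWedge_zero, pathWedge_const_of_central hx,
      map_zero, pathPrimitive_const_apply]
    simp
  calc ceBoundaryCLM hB (period B Γ Γ' v)
    _ = ∫ s in (0 : ℝ)..1, ceBoundaryCLM hB (pathPrimitive (periodDensity B (Γ s) (Γ' s) v) 1) :=
      ((ceBoundaryCLM hB).intervalIntegral_comp_comm
        (h.intervalIntegrable_periodDensity hB v)).symm
    _ = ∫ s in (0 : ℝ)..1,
          (pathPrimitive (periodDensity B (Γ s) (Γ' s) (ceBoundary B hB.isAlt v)) 1 -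
            pathPrimitive (pathWedgeDeriv B (Γ s) (Γ' s) v) 1) :=
      intervalIntegral.integral_congr fun s hs =>
        h.ceBoundary_pathPrimitive_periodDensity hB (by simpa using hs) v
    _ = period B Γ Γ' (ceBoundary B hB.isAlt v) - ι ℝ x * v := by
      rw [intervalIntegral.integral_sub (h.intervalIntegrable_periodDensity hB _)
        (wedge_curve.continuousOn_deriv.intervalIntegrable_of_Icc zero_le_one),
        wedge_integral, period]

theorem IsC1Curve.map_period (hB : IsLieBracket B) {Γ Γ' : ℝ → C(I, g)} (h : IsC1Curve Γ Γ')
    (L : Module.End ℝ (ExteriorAlgebra ℝ g)) {u v : ExteriorAlgebra ℝ g}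
    (hL : ∀ s t, L (periodDensity B (Γ s) (Γ' s) v t) = periodDensity B (Γ s) (Γ' s) u t) :
    L (period B Γ Γ' v) = period B Γ Γ' u := by
  refine ((LinearMap.toContinuousLinearMap L).intervalIntegral_comp_comm
    (h.intervalIntegrable_periodDensity hB v)).symm.trans ?_
  refine intervalIntegral.integral_congr fun s _ => ?_
  refine (map_pathPrimitive (LinearMap.toContinuousLinearMap L) _ 1).trans ?_
  exact congr(pathPrimitive $(ContinuousMap.ext (hL s)) 1)

theorem period_smul (Γ Γ' : ℝ → C(I, g)) (r : ℝ) (v : ExteriorAlgebra ℝ g) :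
    period B Γ Γ' (r • v) = r • period B Γ Γ' v := by
  simp only [period, periodDensity, pathWedge, map_smul, mul_smul_comm]
  exact intervalIntegral.integral_smul r _

theorem IsC1Curve.ι_mul_period_of_central (hB : IsLieBracket B) {Γ Γ' : ℝ → C(I, g)}
    (h : IsC1Curve Γ Γ') {x : g} (hx : B x = 0) (v : ExteriorAlgebra ℝ g) :
    ι ℝ x * period B Γ Γ' v = period B Γ Γ' (ι ℝ x * v) := by
  refine h.map_period hB (LinearMap.mulLeft ℝ (ι ℝ x)) fun s t => ?_
  set a := leftLogDeriv B (Γ s) (Γ' s) t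
  set b := pathTransportInv B (Γ s) t (Γ s t)
  set w := exteriorPath (pathTransportInv B (Γ s)) v t
  change ι ℝ x * (ι ℝ a * (ι ℝ b * w)) =
    ι ℝ a * (ι ℝ b * exteriorPath (pathTransportInv B (Γ s)) (ι ℝ x * v) t)
  rw [exteriorPath_ι_mul]
  change _ = ι ℝ a * (ι ℝ b * (ι ℝ (pathTransportInv B (Γ s) t x) * w))
  rw [pathTransportInv_apply_of_central hB _ hx, ι_mul_ι_mul_comm x a,
    ι_mul_ι_mul_comm x b, mul_neg, neg_neg]

theorem IsC1Curve.map_two_smul_period (hB : IsLieBracket B) {Γ Γ' : ℝ → C(I, g)}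
    (h : IsC1Curve Γ Γ') (v : ExteriorAlgebra ℝ g) :
    ExteriorAlgebra.map ((2 : ℝ) • LinearMap.id) (period B Γ Γ' v) =
      (4 : ℝ) • period B Γ Γ' (ExteriorAlgebra.map ((2 : ℝ) • LinearMap.id) v) := by
  rw [← period_smul]
  refine h.map_period hB (ExteriorAlgebra.map ((2 : ℝ) • LinearMap.id)).toLinearMap fun s t => ?_
  set a := leftLogDeriv B (Γ s) (Γ' s) t
  set b := pathTransportInv B (Γ s) t (Γ s t)
  set S := pathTransportInv B (Γ s)
  change ExteriorAlgebra.map ((2 : ℝ) • LinearMap.id) (ι ℝ a * (ι ℝ b * exteriorPath S v t)) =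
    ι ℝ a * (ι ℝ b * exteriorPath S ((4 : ℝ) • ExteriorAlgebra.map ((2 : ℝ) • LinearMap.id) v) t)
  have commute : ExteriorAlgebra.map ((2 : ℝ) • LinearMap.id) (exteriorPath S v t) =
      exteriorPath S (ExteriorAlgebra.map ((2 : ℝ) • LinearMap.id) v) t := by
    rw [exteriorPath_apply, exteriorPath_apply, ← AlgHom.comp_apply, ← AlgHom.comp_apply,
      map_comp_map, map_comp_map, LinearMap.comp_smul, LinearMap.smul_comp, LinearMap.id_comp,
      LinearMap.comp_id]
  have square : (4 : ℝ) = 2 * 2 := by norm_num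
  rw [map_mul, map_mul, map_apply_ι, map_apply_ι, commute, map_smul, ContinuousMap.smul_apply]
  simp only [LinearMap.smul_apply, LinearMap.id_apply, map_smul, smul_mul_assoc, mul_smul_comm,
    square, mul_smul]

theorem InPathZero.eq_zero_of_central (hB : IsLieBracket B) {x : g} (hx : B x = 0)
    (h : InPathZero B (.const I x)) : x = 0 := by
  obtain ⟨Γ, Γ', hΓ, h0, h1⟩ := inPathZero_iff.1 h
  let w (n : ℕ) : ExteriorAlgebra ℝ g := (period B Γ Γ')^[n] 1
  have w_succ (n : ℕ) : w (n + 1) = period B Γ Γ' (w n) := iterate_succ_apply' _ _ _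
  have boundary_w (n : ℕ) :
      ceBoundary B hB.isAlt (w (n + 1)) = -((n + 1 : ℝ) • (ι ℝ x * w n)) := by
    induction n with
    | zero =>
      have boundary_one : ceBoundary B hB.isAlt (w 0) = 0 :=
        (congrArg _ (map_one (algebraMap ℝ _)).symm).trans (ceBoundary_algebraMap 1)
      have period_zero : period B Γ Γ' 0 = 0 := by simpa using period_smul Γ Γ' 0 0
      rw [w_succ, hΓ.ceBoundary_period hB h0 hx h1, boundary_one, period_zero]
      simp
    | succ n ih =>
      rw [w_succ, hΓ.ceBoundary_period hB h0 hx h1, ih, ← neg_smul, period_smul,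
        ← hΓ.ι_mul_period_of_central hB hx, ← w_succ]
      push_cast
      module
  have scaling_w (n : ℕ) :
      ExteriorAlgebra.map ((2 : ℝ) • LinearMap.id) (w n) = (4 : ℝ) ^ n • w n := by
    induction n with
    | zero => simp [w]
    | succ n ih => rw [w_succ, hΓ.map_two_smul_period hB, ih, period_smul, smul_smul, pow_succ']
  exact eq_zero_of_ceBoundary_tower hB.jacobi hx rfl boundary_w
    (exists_eq_zero_of_eigenvector_pow (ExteriorAlgebra.map ((2 : ℝ) • LinearMap.id)).toLinearMap
      (pow_right_injective₀ (by norm_num) (by norm_num)) scaling_w)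

end ExteriorPath

section Correction

theorem exists_isC1Curve_of_isPicardLindelof {E : Type*} [NormedAddCommGroup E] [NormedSpace ℝ E]
    [CompleteSpace E] {f : ℝ → E → E} {x₀ : E} {a L K : NNReal}
    (hf : IsPicardLindelof f (0 : I) x₀ a 0 L K) :
    ∃ α : ℝ → E, α 0 = x₀ ∧ (∀ t ∈ I, α t ∈ Metric.closedBall x₀ a) ∧
      IsC1Curve α (fun t => f t (α t)) := by
  have hx₀ : x₀ ∈ Metric.closedBall x₀ ((0 : NNReal) : ℝ) := Metric.mem_closedBall_self le_rfl
  obtain ⟨α, hα⟩ := ODE.FunSpace.exists_isFixedPt_next hf hx₀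
  have mem_ball : ∀ t ∈ I, α.compProj t ∈ Metric.closedBall x₀ a :=
    fun _ _ => α.compProj_mem_closedBall hf.mul_max_le
  have fixed : ∀ t ∈ I, α.compProj t = ODE.picard f 0 x₀ α.compProj t := fun t ht => by
    rw [ODE.FunSpace.compProj_of_mem ht]
    exact (ODE.FunSpace.isFixedPt_next_iff hf hx₀).1 hα ⟨t, ht⟩
  have cont : Continuous α.compProj := α.continuous_compProj
  refine ⟨α.compProj, ?_, mem_ball, fun t ht => ?_, ?_⟩
  · rw [fixed 0 unitInterval.zero_mem, ODE.picard_apply₀]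
  · exact (ODE.hasDerivWithinAt_picard_Icc unitInterval.zero_mem hf.continuousOn_uncurry
      cont.continuousOn mem_ball x₀ ht).congr_of_mem fixed ht
  · exact hf.continuousOn_uncurry.comp (continuousOn_id.prodMk cont.continuousOn)
      fun t ht => ⟨ht, mem_ball t ht⟩

theorem exists_isC1Curve_of_contDiffAt {E : Type*} [NormedAddCommGroup E] [NormedSpace ℝ E]
    [CompleteSpace E] {G : E → E →L[ℝ] E} (hG : ContDiffAt ℝ 1 G 0) {a : ℝ} (ha : 0 < a) :
    ∃ η > 0, ∀ θ : ℝ → E, ContinuousOn θ I → (∀ s ∈ I, ‖θ s‖ ≤ η) →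
      ∃ α : ℝ → E, α 0 = 0 ∧ (∀ s ∈ I, ‖α s‖ ≤ a) ∧ IsC1Curve α (fun s => G (α s) (θ s)) := by
  obtain ⟨K, U, hU, lipschitz⟩ := hG.exists_lipschitzOnWith
  set M := ‖G 0‖ + 1
  have hM : 0 < M := by positivity
  have bounded : ∀ᶠ x in 𝓝 0, ‖G x‖ < M :=
    hG.continuousAt.norm.eventually (gt_mem_nhds (lt_add_one _))
  obtain ⟨r, hr, hball⟩ := Metric.nhds_basis_closedBall.mem_iff.1 (inter_mem hU bounded)
  lift min a r to NNReal using (lt_min ha hr).le with b hb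
  have hb₀ : (0 : ℝ) < b := hb ▸ lt_min ha hr
  have ball_subset : Metric.closedBall (0 : E) b ⊆ U ∩ {x | ‖G x‖ < M} :=
    (Metric.closedBall_subset_closedBall (hb ▸ min_le_right a r)).trans hball
  lift (b : ℝ) / M to NNReal using (div_pos hb₀ hM).le with η hη
  refine ⟨η, hη ▸ div_pos hb₀ hM, fun θ hθ θ_le => ?_⟩
  have picard : IsPicardLindelof (fun s x => G x (θ s)) (0 : I) 0 b 0 b (K * η) :=
    { lipschitzOnWith := fun s hs => .of_dist_le_mul fun x hx y hy => by
        have lipschitz_xy := lipschitz.dist_le_mul x (ball_subset hx).1 y (ball_subset hy).1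
        rw [dist_eq_norm (G x)] at lipschitz_xy
        calc dist (G x (θ s)) (G y (θ s)) = ‖(G x - G y) (θ s)‖ := dist_eq_norm _ _
          _ ≤ ‖G x - G y‖ * ‖θ s‖ := ContinuousLinearMap.le_opNorm _ _
          _ ≤ K * dist x y * η := by gcongr; exact θ_le s hs
          _ = (K * η : NNReal) * dist x y := by push_cast; ring
      continuousOn := fun x _ => (G x).continuous.comp_continuousOn hθ
      norm_le := fun s hs x hx => by
        calc ‖G x (θ s)‖ ≤ ‖G x‖ * ‖θ s‖ := ContinuousLinearMap.le_opNorm _ _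
          _ ≤ M * η := by gcongr; exacts [(ball_subset hx).2.le, θ_le s hs]
          _ = b := by rw [hη, mul_div_cancel₀ _ hM.ne']
      mul_max_le := by simp }
  obtain ⟨α, h0, mem_ball, hα⟩ := exists_isC1Curve_of_isPicardLindelof picard
  exact ⟨α, h0, fun s hs => (mem_closedBall_zero_iff.1 (mem_ball s hs)).trans
    (hb ▸ min_le_left a r), hα⟩

variable {g : Type*} [NormedAddCommGroup g] [NormedSpace ℝ g] [FiniteDimensional ℝ g]
  {B : g →ₗ[ℝ] g →ₗ[ℝ] g}

/-- The integral `∫₀¹ A_x(t)⁻¹ dt = (1 - e^{-ad x}) / ad x` for the constant path `x`, i.e. the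
left-trivialized derivative of the exponential map. -/
noncomputable def leftDexp (B : g →ₗ[ℝ] g →ₗ[ℝ] g) (x : g) : g →L[ℝ] g :=
  pathPrimitive (pathTransportInv B (.const I x)) 1

theorem leftLogDeriv_const_apply_one (x y : g) :
    leftLogDeriv B (.const I x) (.const I y) 1 = leftDexp B x y :=
  (map_pathPrimitive (.apply ℝ g y) (pathTransportInv B (.const I x)) 1).symm

@[simp]
theorem leftDexp_zero : leftDexp B 0 = 1 := by
  rw [leftDexp, pathTransportInv_eq_one (adPath_const_of_central (map_zero B))]
  exact (pathPrimitive_const_apply 1 1).trans (one_smul ℝ _)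

theorem contDiff_leftDexp : ContDiff ℝ 1 (leftDexp B) := by
  have h : ContDiff ℝ 1 fun x => pathTransportInv B (ContinuousLinearMap.const ℝ I x) :=
    contDiff_pathTransportInv.comp (by fun_prop)
  let integral : C(I, g →L[ℝ] g) →L[ℝ] g →L[ℝ] g := ContinuousMap.evalCLM ℝ 1 ∘L pathPrimitive
  exact (by fun_prop : ContDiff ℝ 1 integral).comp h

theorem pathTransportInv_const_apply_one (x : g) :
    pathTransportInv B (.const I x) 1 = 1 - leftDexp B x * adCLM B x := by
  let mulAd : (g →L[ℝ] g) →L[ℝ] g →L[ℝ] g := (ContinuousLinearMap.mul ℝ _).flip (adCLM B x)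
  have integrated :=
    (hasPathDeriv_pathTransportInv (B := B) (.const I x)).eq_const_add_pathPrimitive
  rw [map_neg, pathTransportInv_apply_zero, ← sub_eq_add_neg] at integrated
  rw [integrated]
  exact congrArg (1 - ·) (map_pathPrimitive mulAd (pathTransportInv B (.const I x)) 1).symm

theorem eventually_isUnit_leftDexp : ∀ᶠ x in 𝓝 0, IsUnit (leftDexp B x) := by
  refine contDiff_leftDexp.continuous.continuousAt.eventually (Units.isOpen.mem_nhds ?_)
  simp

theorem eventually_norm_leftLogDeriv_smul_le {η : ℝ} (hη : 0 < η) :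
    ∀ᶠ δ in 𝓝 (0 : C(I, g)), ∀ s ∈ I, ‖leftLogDeriv B (s • δ) δ 1‖ ≤ η := by
  refine isCompact_Icc.eventually_forall_of_forall_eventually fun s _ => ?_
  have cont : Continuous fun p : C(I, g) × ℝ => ‖leftLogDeriv B (p.2 • p.1) p.1 1‖ := by
    have := continuous_leftLogDeriv (B := B)
    fun_prop
  refine (cont.continuousAt.eventually (gt_mem_nhds ?_)).mono fun _ h => h.le
  simpa using hη

/-- The vector field `x ↦ (θ ↦ (ad x - (leftDexp x)⁻¹) θ)` driving the correction: along
`s ↦ (s δ) · α s` with constant paths `α s`, horizontality is the differential equation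
`α' = correctionField α θ`, where `θ s = leftLogDeriv B (s δ) δ 1`. -/
noncomputable def correctionField (B : g →ₗ[ℝ] g →ₗ[ℝ] g) (x : g) : g →L[ℝ] g :=
  adCLM B x - Ring.inverse (leftDexp B x)

theorem contDiffAt_correctionField : ContDiffAt ℝ 1 (correctionField B) 0 := by
  have := FiniteDimensional.complete ℝ g
  have inverse := contDiffAt_ringInverse ℝ (n := 1) (R := g →L[ℝ] g) 1
  rw [Units.val_one, ← leftDexp_zero (B := B)] at inverse
  exact (adCLM B).contDiff.contDiffAt.sub (inverse.comp 0 contDiff_leftDexp.contDiffAt)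

theorem leftLogDeriv_pathProdDeriv_correctionField (hB : IsLieBracket B) {x : g}
    (hx : IsUnit (leftDexp B x)) (γ γ' : C(I, g)) :
    leftLogDeriv B (pathProd B γ (.const I x)) (pathProdDeriv B γ γ' (.const I x)
      (.const I (correctionField B x (leftLogDeriv B γ γ' 1)))) 1 = 0 := by
  set θ := leftLogDeriv B γ γ' 1
  calc leftLogDeriv B _ _ 1
      = pathTransportInv B (.const I x) 1 θ +
        leftLogDeriv B (.const I x) (.const I (correctionField B x θ)) 1 :=
        congr($(leftLogDeriv_pathProdDeriv hB γ γ' _ _) 1)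
    _ = (1 - leftDexp B x * Ring.inverse (leftDexp B x)) θ := by
        rw [leftLogDeriv_const_apply_one, pathTransportInv_const_apply_one, correctionField]
        simp
    _ = 0 := by rw [Ring.mul_inverse_cancel _ hx, sub_self, zero_apply]

theorem eventually_exists_inPathZero_pathProd_const (hB : IsLieBracket B) {a : ℝ} (ha : 0 < a) :
    ∀ᶠ δ in 𝓝 (0 : C(I, g)), ∃ x, ‖x‖ ≤ a ∧ IsUnit (leftDexp B x) ∧
      InPathZero B (pathProd B δ (.const I x)) := by
  have := FiniteDimensional.complete ℝ g
  obtain ⟨r, hr, unit⟩ := Metric.nhds_basis_closedBall.eventually_iff.1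
    (eventually_isUnit_leftDexp (B := B))
  obtain ⟨η, hη, solve⟩ := exists_isC1Curve_of_contDiffAt (contDiffAt_correctionField (B := B))
    (lt_min ha hr)
  filter_upwards [eventually_norm_leftLogDeriv_smul_le (B := B) hη] with δ small
  have line : IsC1Curve (fun s : ℝ => s • δ) (fun _ => δ) :=
    ⟨fun s _ => by simpa using ((hasDerivAt_id s).smul_const δ).hasDerivWithinAt,
      continuousOn_const⟩
  obtain ⟨α, h0, α_le, hα⟩ := solve (fun s => leftLogDeriv B (s • δ) δ 1)
    ((ContinuousMap.evalCLM ℝ (1 : I) : C(I, g) →L[ℝ] g).continuous.comp_continuousOn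
      line.continuousOn_leftLogDeriv) small
  have unit_α (s) (hs : s ∈ I) : IsUnit (leftDexp B (α s)) :=
    unit (mem_closedBall_zero_iff.2 ((α_le s hs).trans (min_le_right a r)))
  have one_mem : (1 : ℝ) ∈ I := unitInterval.one_mem
  refine ⟨α 1, (α_le 1 one_mem).trans (min_le_left a r), unit_α 1 one_mem,
    inPathZero_iff.2 ⟨_, _, ⟨line.pathProd hB (hα.map (.const ℝ I)), fun s hs =>
      leftLogDeriv_pathProdDeriv_correctionField hB (unit_α s hs) (s • δ) δ⟩, ?_, ?_⟩⟩
  · simp [h0]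
  · rw [one_smul]
    rfl

theorem eventually_exists_central_inPathZero_add_const (hB : IsLieBracket B) {a : ℝ}
    (ha : 0 < a) :
    ∀ᶠ δ in 𝓝 (0 : C(I, g)), pathTransport B δ 1 = 1 →
      ∃ x, ‖x‖ ≤ a ∧ B x = 0 ∧ InPathZero B (δ + .const I x) := by
  filter_upwards [eventually_exists_inPathZero_pathProd_const hB ha] with δ correction trivial_δ
  obtain ⟨x, hxa, unit, mem⟩ := correction
  have trivial_x : pathTransport B (.const I x) 1 = 1 := by
    have h := mem.pathTransport_apply_one hB
    rwa [pathTransport_pathProd hB, ContinuousMap.mul_apply, trivial_δ, one_mul] at h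
  have inv_trivial_x : pathTransportInv B (.const I x) 1 = 1 := by
    have h := congr($(pathTransportInv_mul (B := B) (.const I x)) 1)
    rwa [ContinuousMap.mul_apply, trivial_x, mul_one] at h
  have ad_eq_zero : adCLM B x = 0 := by
    rw [pathTransportInv_const_apply_one, sub_eq_self] at inv_trivial_x
    exact unit.mul_right_eq_zero.1 inv_trivial_x
  have central : B x = 0 := LinearMap.ext fun y => congr($ad_eq_zero y)
  exact ⟨x, hxa, central, pathProd_const_of_central hB δ central ▸ mem⟩

theorem eq_of_inPathZero_add_const (hB : IsLieBracket B) {γ : C(I, g)} {x y : g}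
    (hx : B x = 0) (hy : B y = 0) (hγx : InPathZero B (γ + .const I x))
    (hγy : InPathZero B (γ + .const I y)) : x = y := by
  have central : B (y - x) = 0 := by rw [map_sub, hx, hy, sub_zero]
  have factor : γ + .const I y = pathProd B (γ + .const I x) (.const I (y - x)) := by
    rw [pathProd_const_of_central hB _ central]
    ext t
    simp
  have mem := (hγx.pathProdInv hB).pathProd hB hγy
  rw [factor, ← pathProd_assoc hB, pathProdInv_pathProd hB, zero_pathProd] at mem
  exact (sub_eq_zero.1 (mem.eq_zero_of_central hB central)).symm

theorem isClosed_pathTransport_apply_one_eq_one :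
    IsClosed {γ : C(I, g) | pathTransport B γ 1 = 1} := by
  have cont := (contDiff_pathTransport (B := B)).continuous
  exact isClosed_eq (by fun_prop) continuous_const

theorem tendsto_pathProdInv_pathProd (hB : IsLieBracket B) (γ : C(I, g)) :
    Tendsto (fun p => pathProd B (pathProdInv B p) γ) (𝓝 γ) (𝓝 0) := by
  have cont : Continuous fun p => pathProd B (pathProdInv B p) γ := by
    have h := (contDiff_pathTransport (B := B)).continuous
    have h' := (contDiff_pathTransportInv (B := B)).continuous
    unfold pathProd pathProdInv
    fun_prop
  simpa only [pathProdInv_pathProd hB] using cont.tendsto γ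

theorem exists_central_inPathZero_add_const_of_mem_closure (hB : IsLieBracket B) {γ : C(I, g)}
    (hγ : γ ∈ closure {γ | InPathZero B γ}) {a : ℝ} (ha : 0 < a) :
    ∃ x, ‖x‖ ≤ a ∧ B x = 0 ∧ InPathZero B (γ + .const I x) := by
  have trivial_γ : pathTransport B γ 1 = 1 :=
    closure_minimal (fun _ hp => hp.pathTransport_apply_one hB)
      isClosed_pathTransport_apply_one_eq_one hγ
  obtain ⟨p, hp, correction⟩ := ((mem_closure_iff_frequently.1 hγ).and_eventually
    ((tendsto_pathProdInv_pathProd hB γ).eventually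
      (eventually_exists_central_inPathZero_add_const hB ha))).exists
  set δ := pathProd B (pathProdInv B p) γ
  have trivial_δ : pathTransport B δ 1 = 1 := by
    rw [pathTransport_pathProd hB, ContinuousMap.mul_apply, trivial_γ, mul_one,
      (InPathZero.pathProdInv hB hp).pathTransport_apply_one hB]
  obtain ⟨x, hxa, central, mem⟩ := correction trivial_δ
  have p_mul_δ : pathProd B p δ = γ := by
    rw [← pathProd_assoc hB, pathProd_pathProdInv, zero_pathProd]
  refine ⟨x, hxa, central, ?_⟩
  rw [← pathProd_const_of_central hB _ central, ← p_mul_δ, pathProd_assoc hB,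
    pathProd_const_of_central hB _ central]
  exact InPathZero.pathProd hB hp mem

theorem isClosed_inPathZero (hB : IsLieBracket B) : IsClosed {γ : C(I, g) | InPathZero B γ} := by
  refine isClosed_of_closure_subset fun γ hγ => ?_
  obtain ⟨x, -, hx, hγx⟩ := exists_central_inPathZero_add_const_of_mem_closure hB hγ one_pos
  have x_eq_zero : x = 0 := by
    refine norm_le_zero_iff.1 (le_of_forall_gt_imp_ge_of_dense fun a ha => ?_)
    obtain ⟨y, hya, hy, hγy⟩ := exists_central_inPathZero_add_const_of_mem_closure hB hγ ha
    rwa [eq_of_inPathZero_add_const hB hx hy hγx hγy]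
  have const_eq_zero : ContinuousMap.const I x = 0 := by rw [x_eq_zero]; rfl
  rwa [const_eq_zero, add_zero] at hγx

end Correction

/-- The subgroup `P(g)₀` of the path group `P(g) = C([0,1], g)` is a closed and
path-connected subset of the Banach space `C([0,1], g)` (supremum norm). -/
theorem pathZero_isClosed_isPathConnected {g : Type*}
    [NormedAddCommGroup g] [NormedSpace ℝ g] [FiniteDimensional ℝ g]
    (B : g →ₗ[ℝ] g →ₗ[ℝ] g) (hB : IsLieBracket B) :
    IsClosed {γ : C(Set.Icc (0:ℝ) 1, g) | InPathZero B γ} ∧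
    IsPathConnected {γ : C(Set.Icc (0:ℝ) 1, g) | InPathZero B γ} :=
  ⟨isClosed_inPathZero hB, isPathConnected_inPathZero⟩
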